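/- arXiv:1810.03061 — 5 statements merged into one kernel-verified Lean document; each statement's English description precedes it below -/
import Mathlib

section
/- Let p and (p_k)_{k∈ℕ} be Borel probability measures on SL(2,ℝ) with finite first moment (i.e. elements of P₁(SL(2,ℝ))), and suppose W₁(p_k, p) → 0 as k → ∞. Then limsup_{k→∞} λ₊(p_k) ≤ λ₊(p). In other words, the function p ↦ λ₊(p) is upper semicontinuous on P₁(SL(2,ℝ)) with respect to the Wasserstein topology. -/
open MeasureTheory Filter Topology Matrix
open scoped ENNReal

noncomputable section

abbrev SL2 : Type := Matrix.SpecialLinearGroup (Fin 2) ℝ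

/-- Topology on `SL(2,ℝ)` induced from the (finite-dimensional) space of matrices. -/
instance : TopologicalSpace SL2 :=
  TopologicalSpace.induced (fun α : SL2 => (α : Matrix (Fin 2) (Fin 2) ℝ)) inferInstance

/-- Borel σ-algebra on `SL(2,ℝ)`. -/
instance : MeasurableSpace SL2 := borel SL2

/-- The ℓ² operator norm of a 2×2 real matrix. -/
noncomputable def opNorm (A : Matrix (Fin 2) (Fin 2) ℝ) : ℝ :=
  ‖LinearMap.toContinuousLinearMap (Matrix.toEuclideanLin A)‖

/-- Distance on `SL(2,ℝ)` induced by the operator norm. -/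
noncomputable def dSL (α β : SL2) : ℝ :=
  opNorm ((α : Matrix (Fin 2) (Fin 2) ℝ) - (β : Matrix (Fin 2) (Fin 2) ℝ))

/-- The sequence `n ↦ (1/n) ∫ log (nrm (B(β_{n-1}) ⋯ B(β_1) B(β_0))) dqⁿ`. -/
noncomputable def lyapSeq {X G : Type*} [MeasurableSpace X] [Monoid G]
    (B : X → G) (nrm : G → ℝ) (q : Measure X) [SigmaFinite q] : ℕ → ℝ := fun n =>
  (n : ℝ)⁻¹ * ∫ ω : Fin n → X,
    Real.log (nrm ((List.ofFn fun i => B (ω i)).reverse.prod)) ∂(Measure.pi fun _ => q)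

/-- Top Lyapunov exponent of the i.i.d. cocycle generated by `B` with distribution `q`,
`λ₊(B,q) = lim_n (1/n) ∫ log (nrm (B(β_{n-1}) ⋯ B(β_0))) dqⁿ`. -/
noncomputable def lyapCocycle {X G : Type*} [MeasurableSpace X] [Monoid G]
    (B : X → G) (nrm : G → ℝ) (q : Measure X) [SigmaFinite q] : ℝ :=
  limUnder atTop (lyapSeq B nrm q)

/-- Top Lyapunov exponent of i.i.d. products of matrices in `SL(2,ℝ)`. -/
noncomputable def lyapPlus (p : Measure SL2) [SigmaFinite p] : ℝ :=
  lyapCocycle id (fun α : SL2 => opNorm (α : Matrix (Fin 2) (Fin 2) ℝ)) p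

/-- Bottom Lyapunov exponent of i.i.d. products of matrices in `SL(2,ℝ)`:
`λ₋(p) = lim_n (1/n) ∫ log (‖(α_{n-1}⋯α₀)⁻¹‖⁻¹) dpⁿ`. -/
noncomputable def lyapMinus (p : Measure SL2) [SigmaFinite p] : ℝ :=
  lyapCocycle id (fun α : SL2 => (opNorm ((α⁻¹ : SL2) : Matrix (Fin 2) (Fin 2) ℝ))⁻¹) p

/-- Wasserstein-1 distance of two measures, with respect to a distance function `d`:
the infimum over all couplings `π` of `μ` and `ν` of `∫ d(x,y) dπ`. -/
noncomputable def W1 {M : Type*} [MeasurableSpace M] (d : M → M → ℝ) (μ ν : Measure M) : ℝ≥0∞ :=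
  ⨅ (π : Measure (M × M)) (_ : π.map Prod.fst = μ) (_ : π.map Prod.snd = ν),
    ∫⁻ x, ENNReal.ofReal (d x.1 x.2) ∂π


theorem usc_exists_lip {Y : Type*} [PseudoMetricSpace Y] [MeasurableSpace Y] [BorelSpace Y]
    [SecondCountableTopology Y] (f : Y → ℝ) (hf : Continuous f) (y0 : Y) (C : ℝ) (hC0 : 0 ≤ C)
    (h0 : ∀ y, 0 ≤ f y) (hC : ∀ y, f y ≤ C * dist y0 y) (q : Measure Y)
    (hq : Integrable (fun y => dist y0 y) q) (ε : ℝ) (hε : 0 < ε) :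
    ∃ (L : ℝ) (g : Y → ℝ), 0 ≤ L ∧ (∀ x y, g x ≤ g y + L * dist x y) ∧ Continuous g ∧
      (∀ x, f x ≤ g x) ∧ (∀ x, g x ≤ C * dist y0 x) ∧ ∫ x, g x ∂q ≤ ∫ x, f x ∂q + ε := by
  haveI : Nonempty Y := ⟨y0⟩
  let g : ℕ → Y → ℝ := fun N x => ⨆ y, (f y - (C + N) * dist x y)
  have hbd : ∀ (N : ℕ) (x y : Y), f y - (C + N) * dist x y ≤ C * dist y0 x := by
    intro N x y
    have h1 := hC y
    have h2 := dist_triangle y0 x y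
    have h3 : (0:ℝ) ≤ N * dist x y := by positivity
    nlinarith
  have hbdd : ∀ (N : ℕ) (x : Y), BddAbove (Set.range fun y => f y - (C + N) * dist x y) := by
    rintro N x
    refine ⟨C * dist y0 x, ?_⟩
    rintro _ ⟨y, rfl⟩
    exact hbd N x y
  have hgle : ∀ N x, g N x ≤ C * dist y0 x := fun N x => ciSup_le (hbd N x)
  have hfg : ∀ N x, f x ≤ g N x := by
    intro N x
    have := le_ciSup (hbdd N x) x
    simpa using this
  have hlip : ∀ (N : ℕ) x y, g N x ≤ g N y + (C + N) * dist x y := by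
    intro N x y
    refine ciSup_le fun z => ?_
    have h1 := le_ciSup (hbdd N y) z
    have h2 := dist_triangle y x z
    rw [dist_comm y x] at h2
    have h3 : (0:ℝ) ≤ C + N := by positivity
    have h4 := mul_le_mul_of_nonneg_left h2 h3
    change f z - (C + N) * dist y z ≤ g N y at h1
    linarith
  have hcont : ∀ N, Continuous (g N) := by
    intro N
    have h3 : (0:ℝ) ≤ C + N := by positivity
    refine LipschitzWith.continuous (K := (C + N).toNNReal) ?_
    refine LipschitzWith.of_le_add_mul _ fun x y => ?_
    rw [Real.coe_toNNReal _ h3]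
    exact hlip N x y
  have hlim : ∀ x, Tendsto (fun N => g N x) atTop (𝓝 (f x)) := by
    intro x
    rw [Metric.tendsto_atTop]
    intro e he
    obtain ⟨δ, hδ, hball⟩ := Metric.continuous_iff.1 hf x (e / 2) (by positivity)
    obtain ⟨N0, hN0⟩ := exists_nat_ge (C * dist y0 x / δ)
    refine ⟨N0, fun N hN => ?_⟩
    have hNN : C * dist y0 x ≤ N * δ := by
      have : (N0 : ℝ) ≤ N := by exact_mod_cast hN
      rw [div_le_iff₀ hδ] at hN0
      nlinarith
    have hup : g N x ≤ f x + e / 2 := by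
      refine ciSup_le fun y => ?_
      have h3 : (0:ℝ) ≤ C + N := by positivity
      by_cases hy : dist y x < δ
      · have h1 := hball y hy
        rw [Real.dist_eq, abs_lt] at h1
        have : 0 ≤ (C + N) * dist x y := by positivity
        linarith [h1.2]
      · push Not at hy
        rw [dist_comm] at hy
        have h1 := hC y
        have h2 := dist_triangle y0 x y
        have h4 : (N:ℝ) * δ ≤ N * dist x y := by gcongr
        have h5 := mul_le_mul_of_nonneg_left h2 hC0
        nlinarith [h0 x]
    rw [Real.dist_eq, abs_lt]
    constructor <;> linarith [hfg N x]
  have hint : Tendsto (fun N => ∫ x, g N x ∂q) atTop (𝓝 (∫ x, f x ∂q)) := by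
    refine tendsto_integral_of_dominated_convergence (fun x => C * dist y0 x)
      (fun N => (hcont N).aestronglyMeasurable) (hq.const_mul C) ?_ ?_
    · intro N
      refine Eventually.of_forall fun x => ?_
      rw [Real.norm_of_nonneg ((h0 x).trans (hfg N x))]
      exact hgle N x
    · exact Eventually.of_forall hlim
  obtain ⟨N, hN⟩ := (hint.eventually (gt_mem_nhds (show ∫ x, f x ∂q < ∫ x, f x ∂q + ε by linarith))).exists
  exact ⟨C + N, g N, by positivity, hlip N, hcont N, hfg N, hgle N, hN.le⟩

theorem usc_compare {Y : Type*} [PseudoMetricSpace Y] [MeasurableSpace Y] [BorelSpace Y]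
    [SecondCountableTopology Y] (f : Y → ℝ) (hf : Continuous f) (y0 : Y) (C : ℝ) (hC0 : 0 ≤ C)
    (h0 : ∀ y, 0 ≤ f y) (hC : ∀ y, f y ≤ C * dist y0 y) (q : Measure Y)
    (hq : Integrable (fun y => dist y0 y) q) (ε : ℝ) (hε : 0 < ε) :
    ∃ L : ℝ, 0 ≤ L ∧ ∀ (q' : Measure Y), Integrable (fun y => dist y0 y) q' →
      ∀ {Z : Type} [MeasurableSpace Z] (π : Measure Z) (a b : Z → Y),
        MeasurePreserving a π q' → MeasurePreserving b π q →
        Integrable (fun z => dist (a z) (b z)) π →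
        ∫ x, f x ∂q' ≤ ∫ x, f x ∂q + ε + L * ∫ z, dist (a z) (b z) ∂π := by
  obtain ⟨L, g, hL, hlip, hcont, hfg, hgC, hgi⟩ := usc_exists_lip f hf y0 C hC0 h0 hC q hq ε hε
  refine ⟨L, hL, fun q' hq' Z _ π a b ha hb hi => ?_⟩
  have int : ∀ r : Measure Y, Integrable (fun y => dist y0 y) r → ∀ u : Y → ℝ, Continuous u →
      (∀ x, f x ≤ u x) → (∀ x, u x ≤ C * dist y0 x) → Integrable u r := by
    intro r hr u hu h1 h2
    refine (hr.const_mul C).mono' hu.aestronglyMeasurable (Eventually.of_forall fun x => ?_)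
    rw [Real.norm_of_nonneg ((h0 x).trans (h1 x))]
    exact h2 x
  have e1 : ∫ x, f x ∂q' ≤ ∫ x, g x ∂q' :=
    integral_mono (int q' hq' f hf (fun _ => le_rfl) hC) (int q' hq' g hcont hfg hgC) hfg
  have iq' := int q' hq' g hcont hfg hgC
  have iq := int q hq g hcont hfg hgC
  have e2 : ∫ x, g x ∂q' = ∫ z, g (a z) ∂π := by
    rw [← ha.map_eq]
    exact integral_map ha.measurable.aemeasurable hcont.aestronglyMeasurable
  have e3 : ∫ x, g x ∂q = ∫ z, g (b z) ∂π := by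
    rw [← hb.map_eq]
    exact integral_map hb.measurable.aemeasurable hcont.aestronglyMeasurable
  have ia : Integrable (fun z => g (a z)) π := ha.integrable_comp_of_integrable iq'
  have ib : Integrable (fun z => g (b z)) π := hb.integrable_comp_of_integrable iq
  have e4 : ∫ z, g (a z) ∂π ≤ ∫ z, (g (b z) + L * dist (a z) (b z)) ∂π :=
    integral_mono ia (ib.add (hi.const_mul L)) fun z => hlip _ _
  rw [integral_add ib (hi.const_mul L), integral_const_mul] at e4
  linarith

theorem usc_comp_inj {X : Type*} [MeasurableSpace X] (p : Measure X) [IsProbabilityMeasure p]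
    {m n : ℕ} (g : Fin m → Fin n) (hg : Function.Injective g) :
    MeasurePreserving (fun (ω : Fin n → X) (i : Fin m) => ω (g i))
      (Measure.pi fun _ => p) (Measure.pi fun _ => p) := by
  refine ⟨by fun_prop, ?_⟩
  have h := ProbabilityTheory.iIndepFun_pi (μ := fun _ : Fin n => p) (X := fun _ => (id : X → X))
    (fun _ => aemeasurable_id)
  have h2 := h.precomp hg
  rw [ProbabilityTheory.iIndepFun_iff_map_fun_eq_pi_map (by intro i; exact (measurable_pi_apply (g i)).aemeasurable)] at h2
  have h3 : ∀ i, Measure.map (fun ω : Fin n → X => ω (g i)) (Measure.pi fun _ => p) = p :=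
    fun i => (measurePreserving_eval (fun _ : Fin n => p) (g i)).map_eq
  simpa [h3] using h2

section SLmetric
open scoped Matrix.Norms.L2Operator

@[reducible] def slMetric : PseudoMetricSpace SL2 :=
  PseudoMetricSpace.induced (fun α : SL2 => (α : Matrix (Fin 2) (Fin 2) ℝ)) inferInstance

attribute [local instance] slMetric

theorem opNorm_eq (A : Matrix (Fin 2) (Fin 2) ℝ) : opNorm A = ‖A‖ := rfl

theorem dSL_eq (α β : SL2) : dSL α β = dist α β := by
  rw [dSL, opNorm_eq, ← dist_eq_norm]; rfl

local instance slBorel : BorelSpace SL2 := ⟨rfl⟩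

local instance slSec : SecondCountableTopology SL2 :=
  Topology.IsInducing.secondCountableTopology (f := fun α : SL2 => (α : Matrix (Fin 2) (Fin 2) ℝ)) ⟨rfl⟩

theorem sl_continuous_coe : Continuous (fun α : SL2 => (α : Matrix (Fin 2) (Fin 2) ℝ)) :=
  continuous_induced_dom

theorem one_le_norm_sl (α : SL2) : 1 ≤ ‖(α : Matrix (Fin 2) (Fin 2) ℝ)‖ := by
  set A := (α : Matrix (Fin 2) (Fin 2) ℝ) with hA
  have hdet : A 0 0 * A 1 1 - A 0 1 * A 1 0 = 1 := by
    rw [← Matrix.det_fin_two]; exact α.2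
  have hcol : ∀ j : Fin 2, A 0 j ^ 2 + A 1 j ^ 2 ≤ ‖A‖ ^ 2 := by
    intro j
    have h := Matrix.l2_opNorm_mulVec A (EuclideanSpace.single j (1:ℝ))
    have h2 := pow_le_pow_left₀ (norm_nonneg _) h 2
    rw [EuclideanSpace.norm_sq_eq] at h2
    simpa [Fin.sum_univ_two] using h2
  have h0 := hcol 0
  have h1 := hcol 1
  have : 1 ≤ ‖A‖ ^ 2 := by
    nlinarith [sq_nonneg (A 0 0 - A 1 1), sq_nonneg (A 0 1 + A 1 0)]
  nlinarith [norm_nonneg A]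

def slF (n : ℕ) (ω : Fin n → SL2) : ℝ :=
  Real.log (opNorm (((List.ofFn fun i => id (ω i)).reverse.prod : SL2) : Matrix (Fin 2) (Fin 2) ℝ))

theorem slF_nonneg (n : ℕ) (ω : Fin n → SL2) : 0 ≤ slF n ω :=
  Real.log_nonneg (one_le_norm_sl _)

theorem sl_norm_list (K : ℝ) (hK : 1 ≤ K) (l : List SL2)
    (h : ∀ a ∈ l, ‖(a : Matrix (Fin 2) (Fin 2) ℝ)‖ ≤ K) :
    ‖(l.prod : SL2).1‖ ≤ K ^ l.length := by
  induction l with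
  | nil => simp
  | cons a l ih =>
    have h1 := h a (by simp)
    have h2 := ih fun b hb => h b (by simp [hb])
    rw [List.prod_cons, List.length_cons, pow_succ']
    refine (Matrix.l2_opNorm_mul a.1 l.prod.1).trans ?_
    gcongr

theorem slF_le (n : ℕ) (ω : Fin n → SL2) : slF n ω ≤ n * dist (1 : Fin n → SL2) ω := by
  set D := dist (1 : Fin n → SL2) ω with hD
  have hD0 : 0 ≤ D := dist_nonneg
  have h := sl_norm_list (1 + D) (by linarith) (List.ofFn fun i => id (ω i)).reverse (by
    intro a ha
    rw [List.mem_reverse, List.mem_ofFn] at ha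
    obtain ⟨i, rfl⟩ := ha
    have h1 : dist (1 : SL2) (ω i) ≤ D := dist_le_pi_dist (1 : Fin n → SL2) ω i
    rw [← dSL_eq, dSL, opNorm_eq] at h1
    have h2 := norm_sub_norm_le (ω i).1 ((1 : SL2) : Matrix (Fin 2) (Fin 2) ℝ)
    rw [norm_sub_rev] at h2
    have h3 : ‖((1 : SL2) : Matrix (Fin 2) (Fin 2) ℝ)‖ = 1 := by
      rw [Matrix.SpecialLinearGroup.coe_one]; exact norm_one
    simp only [id]
    linarith)
  have hp : 0 < ‖(((List.ofFn fun i => id (ω i)).reverse.prod : SL2) : Matrix (Fin 2) (Fin 2) ℝ)‖ :=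
    lt_of_lt_of_le one_pos (one_le_norm_sl _)
  have h4 := Real.log_le_log hp h
  rw [Real.log_pow] at h4
  simp only [List.length_reverse, List.length_ofFn] at h4
  have h5 : Real.log (1 + D) ≤ D := by
    have := Real.log_le_sub_one_of_pos (show 0 < 1 + D by linarith)
    linarith
  calc slF n ω ≤ n * Real.log (1 + D) := h4
    _ ≤ n * D := by gcongr

theorem slF_add (m n : ℕ) (ω : Fin (m + n) → SL2) :
    slF (m + n) ω ≤ slF m (fun i => ω (Fin.castAdd n i)) + slF n (fun i => ω (Fin.natAdd m i)) := by
  have hp : ∀ α : SL2, ‖(α : Matrix (Fin 2) (Fin 2) ℝ)‖ ≠ 0 := fun α =>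
    (lt_of_lt_of_le one_pos (one_le_norm_sl α)).ne'
  have e : (List.ofFn fun i => id (ω i)).reverse.prod =
      (List.ofFn fun i => id (ω (Fin.natAdd m i))).reverse.prod *
      (List.ofFn fun i => id (ω (Fin.castAdd n i))).reverse.prod := by
    rw [List.ofFn_add, List.reverse_append, List.prod_append]
    rfl
  unfold slF
  rw [e, add_comm, opNorm_eq, opNorm_eq, opNorm_eq, ← Real.log_mul (hp _) (hp _)]
  refine Real.log_le_log (lt_of_lt_of_le one_pos (one_le_norm_sl _)) ?_
  rw [Matrix.SpecialLinearGroup.coe_mul]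
  exact Matrix.l2_opNorm_mul _ _

theorem slF_cont (n : ℕ) : Continuous (slF n) := by
  have h : Continuous fun ω : Fin n → SL2 =>
      (((List.ofFn fun i => id (ω i)).reverse.prod : SL2) : Matrix (Fin 2) (Fin 2) ℝ) := by
    have e : ∀ ω : Fin n → SL2,
      (((List.ofFn fun i => id (ω i)).reverse.prod : SL2) : Matrix (Fin 2) (Fin 2) ℝ) =
        ((List.finRange n).reverse.map fun i => (ω i : Matrix (Fin 2) (Fin 2) ℝ)).prod := by
      intro ω
      rw [List.ofFn_eq_map, ← List.map_reverse]
      generalize (List.finRange n).reverse = l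
      induction l with
      | nil => simp
      | cons a l ih => simp only [List.map_cons, List.prod_cons, Matrix.SpecialLinearGroup.coe_mul, id]; exact congrArg _ ih
    simp_rw [e]
    refine continuous_list_prod _ fun i _ => ?_
    exact sl_continuous_coe.comp (continuous_apply i)
  have h2 := h.norm
  exact Continuous.log h2
    fun ω => (lt_of_lt_of_le one_pos (one_le_norm_sl _)).ne'

theorem sl_int_one (p : Measure SL2) (hp : ∫⁻ α, ENNReal.ofReal (dSL 1 α) ∂p < ⊤) :
    Integrable (fun α => dist (1 : SL2) α) p := by
  refine ⟨(continuous_const.dist continuous_id).aestronglyMeasurable, ?_⟩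
  rw [hasFiniteIntegral_iff_ofReal (Eventually.of_forall fun x => dist_nonneg)]
  simpa only [dSL_eq] using hp

theorem sl_int_pi (n : ℕ) (p : Measure SL2) [IsProbabilityMeasure p]
    (hp : ∫⁻ α, ENNReal.ofReal (dSL 1 α) ∂p < ⊤) :
    Integrable (fun ω => dist (1 : Fin n → SL2) ω) (Measure.pi fun _ => p) := by
  have h : Integrable (fun ω : Fin n → SL2 => ∑ i, dist (1 : SL2) (ω i)) (Measure.pi fun _ => p) :=
    integrable_finsetSum _ fun i _ =>
      (measurePreserving_eval (fun _ : Fin n => p) i).integrable_comp_of_integrable (sl_int_one p hp)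
  refine h.mono' (continuous_const.dist continuous_id).aestronglyMeasurable
    (Eventually.of_forall fun ω => ?_)
  rw [Real.norm_of_nonneg dist_nonneg]
  refine (dist_pi_le_iff (Finset.sum_nonneg fun i _ => dist_nonneg)).2 fun i => ?_
  exact Finset.single_le_sum (f := fun i => dist (1 : SL2) (ω i)) (fun _ _ => dist_nonneg) (Finset.mem_univ i)

theorem slF_int (n : ℕ) (p : Measure SL2) [IsProbabilityMeasure p]
    (hp : ∫⁻ α, ENNReal.ofReal (dSL 1 α) ∂p < ⊤) :
    Integrable (slF n) (Measure.pi fun _ => p) := by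
  refine ((sl_int_pi n p hp).const_mul (n:ℝ)).mono' (slF_cont n).aestronglyMeasurable
    (Eventually.of_forall fun ω => ?_)
  rw [Real.norm_of_nonneg (slF_nonneg n ω)]
  exact slF_le n ω

def slU (p : Measure SL2) [IsProbabilityMeasure p] (n : ℕ) : ℝ :=
  ∫ ω, slF n ω ∂(Measure.pi fun _ : Fin n => p)

theorem slU_nonneg (p : Measure SL2) [IsProbabilityMeasure p] (n : ℕ) : 0 ≤ slU p n :=
  integral_nonneg (slF_nonneg n)

theorem slU_subadd (p : Measure SL2) [IsProbabilityMeasure p]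
    (hp : ∫⁻ α, ENNReal.ofReal (dSL 1 α) ∂p < ⊤) : Subadditive (slU p) := by
  intro m n
  have h1 := usc_comp_inj p (Fin.castAdd n : Fin m → Fin (m + n)) (Fin.castAdd_injective m n)
  have h2 := usc_comp_inj p (Fin.natAdd m : Fin n → Fin (m + n)) (Fin.natAdd_injective n m)
  have i1 : Integrable (fun ω : Fin (m + n) → SL2 => slF m (fun i => ω (Fin.castAdd n i)))
      (Measure.pi fun _ => p) := h1.integrable_comp_of_integrable (slF_int m p hp)
  have i2 : Integrable (fun ω : Fin (m + n) → SL2 => slF n (fun i => ω (Fin.natAdd m i)))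
      (Measure.pi fun _ => p) := h2.integrable_comp_of_integrable (slF_int n p hp)
  have e1 : slU p m = ∫ ω : Fin (m + n) → SL2, slF m (fun i => ω (Fin.castAdd n i)) ∂(Measure.pi fun _ => p) := by
    rw [slU, ← h1.map_eq]
    exact integral_map h1.measurable.aemeasurable (slF_cont m).aestronglyMeasurable
  have e2 : slU p n = ∫ ω : Fin (m + n) → SL2, slF n (fun i => ω (Fin.natAdd m i)) ∂(Measure.pi fun _ => p) := by
    rw [slU, ← h2.map_eq]
    exact integral_map h2.measurable.aemeasurable (slF_cont n).aestronglyMeasurable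
  rw [e1, e2, ← integral_add i1 i2]
  exact integral_mono (slF_int _ p hp) (i1.add i2) (slF_add m n)

theorem slU_bdd (p : Measure SL2) [IsProbabilityMeasure p] :
    BddBelow (Set.range fun n => slU p n / n) := by
  refine ⟨0, ?_⟩
  rintro _ ⟨n, rfl⟩
  have := slU_nonneg p n
  positivity

theorem lyapPlus_tendsto (p : Measure SL2) [IsProbabilityMeasure p]
    (hp : ∫⁻ α, ENNReal.ofReal (dSL 1 α) ∂p < ⊤) :
    Tendsto (fun n => slU p n / n) atTop (𝓝 (lyapPlus p)) := by
  have h := (slU_subadd p hp).tendsto_lim (slU_bdd p)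
  have e : lyapSeq id (fun α : SL2 => opNorm (α : Matrix (Fin 2) (Fin 2) ℝ)) p =
      fun n => slU p n / n := by
    funext n
    rw [div_eq_inv_mul]; rfl
  have e2 : lyapPlus p = (slU_subadd p hp).lim := by
    rw [lyapPlus, lyapCocycle, e]
    exact h.limUnder_eq
  rw [e2]; exact h

theorem lyapPlus_le (p : Measure SL2) [IsProbabilityMeasure p]
    (hp : ∫⁻ α, ENNReal.ofReal (dSL 1 α) ∂p < ⊤) (n : ℕ) (hn : n ≠ 0) :
    lyapPlus p ≤ slU p n / n := by
  rw [tendsto_nhds_unique (lyapPlus_tendsto p hp) ((slU_subadd p hp).tendsto_lim (slU_bdd p))]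
  exact (slU_subadd p hp).lim_le_div (slU_bdd p) hn

theorem lyapPlus_nonneg (p : Measure SL2) [IsProbabilityMeasure p]
    (hp : ∫⁻ α, ENNReal.ofReal (dSL 1 α) ∂p < ⊤) : 0 ≤ lyapPlus p :=
  ge_of_tendsto' (lyapPlus_tendsto p hp) fun n => div_nonneg (slU_nonneg p n) n.cast_nonneg

theorem slU_usc (p : Measure SL2) [IsProbabilityMeasure p]
    (hp : ∫⁻ α, ENNReal.ofReal (dSL 1 α) ∂p < ⊤) (n : ℕ) (ε : ℝ) (hε : 0 < ε) :
    ∃ L : ℝ, 0 ≤ L ∧ ∀ (p' : Measure SL2) [IsProbabilityMeasure p'],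
      ∫⁻ α, ENNReal.ofReal (dSL 1 α) ∂p' < ⊤ → ∀ δ : ℝ, 0 < δ →
      W1 dSL p' p < ENNReal.ofReal δ → slU p' n ≤ slU p n + ε + L * (n * δ) := by
  obtain ⟨L, hL, H⟩ := usc_compare (slF n) (slF_cont n) 1 n n.cast_nonneg (slF_nonneg n) (slF_le n)
    (Measure.pi fun _ => p) (sl_int_pi n p hp) ε hε
  refine ⟨L, hL, fun p' _ hp' δ hδ hW => ?_⟩
  simp only [W1, iInf_lt_iff] at hW
  obtain ⟨π, h1, h2, hlt⟩ := hW
  have m1 : MeasurePreserving Prod.fst π p' := ⟨measurable_fst, h1⟩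
  have m2 : MeasurePreserving Prod.snd π p := ⟨measurable_snd, h2⟩
  haveI : IsProbabilityMeasure π := by
    constructor
    have := m1.measure_preimage (MeasurableSet.univ.nullMeasurableSet)
    simpa using this
  have hmeas : Measurable fun z : SL2 × SL2 => dist z.1 z.2 := measurable_fst.dist measurable_snd
  simp only [dSL_eq] at hlt
  have hi : Integrable (fun z : SL2 × SL2 => dist z.1 z.2) π := by
    refine ⟨hmeas.aestronglyMeasurable, ?_⟩
    rw [hasFiniteIntegral_iff_ofReal (Eventually.of_forall fun x => dist_nonneg)]
    exact hlt.trans ENNReal.ofReal_lt_top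
  have hd : ∫ z, dist z.1 z.2 ∂π ≤ δ := by
    rw [← ofReal_integral_eq_lintegral_ofReal hi (Eventually.of_forall fun x => dist_nonneg)] at hlt
    exact ((ENNReal.ofReal_lt_ofReal_iff hδ).1 hlt).le
  let PP : Measure (Fin n → SL2 × SL2) := Measure.pi fun _ => π
  have a1 : MeasurePreserving (fun (z : Fin n → SL2 × SL2) i => (z i).1) PP (Measure.pi fun _ => p') :=
    measurePreserving_pi (fun _ => π) (fun _ => p') fun _ => m1
  have a2 : MeasurePreserving (fun (z : Fin n → SL2 × SL2) i => (z i).2) PP (Measure.pi fun _ => p) :=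
    measurePreserving_pi (fun _ => π) (fun _ => p) fun _ => m2
  have ev : ∀ i, MeasurePreserving (fun z : Fin n → SL2 × SL2 => z i) PP π :=
    fun i => measurePreserving_eval (fun _ : Fin n => π) i
  have ei : ∀ i, Integrable (fun z : Fin n → SL2 × SL2 => dist (z i).1 (z i).2) PP :=
    fun i => (ev i).integrable_comp_of_integrable hi
  have es : Integrable (fun z : Fin n → SL2 × SL2 => ∑ i, dist (z i).1 (z i).2) PP :=
    integrable_finsetSum _ fun i _ => ei i
  have hle : ∀ z : Fin n → SL2 × SL2,
      dist (fun i => (z i).1) (fun i => (z i).2) ≤ ∑ i, dist (z i).1 (z i).2 := by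
    intro z
    refine (dist_pi_le_iff (Finset.sum_nonneg fun i _ => dist_nonneg)).2 fun i => ?_
    exact Finset.single_le_sum (f := fun i => dist (z i).1 (z i).2) (fun _ _ => dist_nonneg)
      (Finset.mem_univ i)
  have eD : Integrable (fun z : Fin n → SL2 × SL2 =>
      dist (fun i => (z i).1) (fun i => (z i).2)) PP := by
    refine es.mono' (a1.measurable.dist a2.measurable).aestronglyMeasurable
      (Eventually.of_forall fun z => ?_)
    rw [Real.norm_of_nonneg dist_nonneg]
    exact hle z
  have key := H (Measure.pi fun _ => p') (sl_int_pi n p' hp') PP _ _ a1 a2 eD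
  have hsum : ∫ z, dist (fun i => (z i).1) (fun i => (z i).2) ∂PP ≤ n * δ := by
    refine (integral_mono eD es hle).trans ?_
    rw [integral_finsetSum _ fun i _ => ei i]
    have : ∀ i, ∫ z, dist (z i).1 (z i).2 ∂PP = ∫ z, dist z.1 z.2 ∂π := by
      intro i
      conv_rhs => rw [← (ev i).map_eq]
      exact (integral_map (ev i).measurable.aemeasurable hmeas.aestronglyMeasurable).symm
    simp only [this, Finset.sum_const, Finset.card_univ, Fintype.card_fin, nsmul_eq_mul]
    gcongr
  have := mul_le_mul_of_nonneg_left hsum hL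
  unfold slU
  linarith

end SLmetric

/-- **Upper semicontinuity of the top Lyapunov exponent in the Wasserstein topology.**
If `p` and the `p_k` are Borel probability measures on `SL(2,ℝ)` with finite first moment
and `W₁(p_k, p) → 0`, then `limsup_k λ₊(p_k) ≤ λ₊(p)`. -/
theorem lyapPlus_upper_semicontinuous_wasserstein
    (p : Measure SL2) (pk : ℕ → Measure SL2)
    [IsProbabilityMeasure p] [∀ k, IsProbabilityMeasure (pk k)]
    (hp : ∫⁻ α, ENNReal.ofReal (dSL 1 α) ∂p < ⊤)
    (hpk : ∀ k, ∫⁻ α, ENNReal.ofReal (dSL 1 α) ∂(pk k) < ⊤)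
    (hW : Tendsto (fun k => W1 dSL (pk k) p) atTop (𝓝 0)) :
    Filter.limsup (fun k => lyapPlus (pk k)) atTop ≤ lyapPlus p := by
  refine le_of_forall_pos_le_add fun ε hε => ?_
  obtain ⟨n, hn, hn0⟩ := (((lyapPlus_tendsto p hp).eventually
    (gt_mem_nhds (show lyapPlus p < lyapPlus p + ε / 2 by linarith))).and
    (eventually_ne_atTop 0)).exists
  have hnpos : (0:ℝ) < n := by exact_mod_cast Nat.pos_of_ne_zero hn0
  obtain ⟨L, hL, H⟩ := slU_usc p hp n (n * (ε / 4)) (by positivity)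
  have hδ : 0 < ε / (4 * (L + 1)) := by positivity
  have hev := hW.eventually (gt_mem_nhds (ENNReal.ofReal_pos.2 hδ))
  refine Filter.limsup_le_of_le ?_ ?_
  · exact Filter.isCoboundedUnder_le_of_le atTop (x := 0) fun k => lyapPlus_nonneg (pk k) (hpk k)
  · filter_upwards [hev] with k hk
    have h1 := H (pk k) (hpk k) _ hδ hk
    have h2 := lyapPlus_le (pk k) (hpk k) n hn0
    have h3 : L * (ε / (4 * (L + 1))) ≤ ε / 4 := by
      rw [mul_div_assoc', div_le_div_iff₀ (by positivity) (by positivity)]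
      nlinarith
    rw [le_div_iff₀ hnpos] at h2
    rw [div_lt_iff₀ hnpos] at hn
    have h4 : L * (n * (ε / (4 * (L + 1)))) ≤ n * (ε / 4) := by
      have := mul_le_mul_of_nonneg_left h3 hnpos.le
      linarith
    have h5 : lyapPlus (pk k) * n ≤ (lyapPlus p + ε) * n := by nlinarith
    exact le_of_mul_le_mul_right h5 hnpos
end
end

section
/- There exist a Borel probability measure q ∈ P₁(SL(2,ℝ)) and a sequence (q_n)_{n∈ℕ} in P₁(SL(2,ℝ)) such that W₁(q_n, q) → 0, λ₊(q_n) = 0 for every n, and λ₊(q) > 0. In particular, the function p ↦ λ₊(p) is not continuous on P₁(SL(2,ℝ)) with respect to the Wasserstein topology. -/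
open MeasureTheory Filter Topology Matrix
open scoped ENNReal

noncomputable section

namespace LyapAux

open scoped Matrix.Norms.L2Operator

def A : SL2 := ⟨!![2, 0; 0, 1/2], by simp [Matrix.det_fin_two]⟩

def R : SL2 := ⟨!![0, -1; 1, 0], by simp [Matrix.det_fin_two]⟩

def f (b : Bool) : SL2 := if b then A else R

lemma f_inj : Function.Injective f := by
  have h : A ≠ R := by
    intro h
    have := congrArg (fun M : SL2 => (M : Matrix (Fin 2) (Fin 2) ℝ) 0 0) h
    simp [A, R] at this
  intro a b hab
  cases a <;> cases b <;> simp_all [f]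

instance : BorelSpace SL2 := ⟨rfl⟩

instance : T2Space SL2 :=
  T2Space.of_injective_continuous (f := fun α : SL2 => (α : Matrix (Fin 2) (Fin 2) ℝ))
    Subtype.val_injective continuous_induced_dom

instance : MeasurableSingletonClass SL2 := inferInstance

/-- the exponent -/
def S : List Bool → ℤ
  | [] => 0
  | true :: l => S l + 1
  | false :: l => - S l

lemma abs_S_le (l : List Bool) : |S l| ≤ l.length := by
  induction l with
  | nil => simp [S]
  | cons b l ih =>
    cases b
    · simp only [S, abs_neg, List.length_cons]; push_cast; linarith
    · simp only [S, List.length_cons]; push_cast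
      calc |S l + 1| ≤ |S l| + |1| := abs_add_le _ _
        _ ≤ _ := by simp; exact ih

def P (l : List Bool) : Matrix (Fin 2) (Fin 2) ℝ := ((l.map f).reverse.prod : SL2)

lemma PtP (l : List Bool) :
    (P l)ᵀ * P l = Matrix.diagonal ![(4:ℝ) ^ (S l), (4:ℝ) ^ (-S l)] := by
  induction l with
  | nil =>
    ext i j; fin_cases i <;> fin_cases j <;> simp [P, S]
  | cons b l ih =>
    have h : P (b :: l) = P l * (f b : Matrix (Fin 2) (Fin 2) ℝ) := by
      simp [P]
    rw [h, Matrix.transpose_mul, Matrix.mul_assoc, ← Matrix.mul_assoc (P l)ᵀ, ih]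
    cases b
    · ext i j
      fin_cases i <;> fin_cases j <;>
        simp [f, R, S, Matrix.mul_apply, Fin.sum_univ_two, Matrix.diagonal]
    · ext i j
      fin_cases i <;> fin_cases j <;>
        simp [f, A, S, Matrix.mul_apply, Fin.sum_univ_two, Matrix.diagonal,
          zpow_add₀, _root_.zpow_neg] <;> ring

lemma opNorm_eq (M : Matrix (Fin 2) (Fin 2) ℝ) : opNorm M = ‖M‖ := by
  rw [Matrix.l2_opNorm_def]; rfl

lemma log_opNorm (l : List Bool) : Real.log (opNorm (P l)) = |(S l : ℝ)| * Real.log 2 := by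
  have h1 : ‖P l‖ * ‖P l‖ = (4:ℝ) ^ |S l| := by
    rw [← Matrix.l2_opNorm_conjTranspose_mul_self, Matrix.conjTranspose_eq_transpose_of_trivial,
      PtP, Matrix.l2_opNorm_diagonal]
    apply le_antisymm
    · rw [pi_norm_le_iff_of_nonneg (by positivity)]
      intro i
      fin_cases i
      · simp only [Fin.zero_eta, Matrix.cons_val_zero, norm_zpow, Real.norm_ofNat]
        exact zpow_le_zpow_right₀ (by norm_num) (le_abs_self _)
      · simp
        rw [← _root_.zpow_neg]
        exact zpow_le_zpow_right₀ (by norm_num) (neg_le_abs _)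
    · rcases abs_choice (S l) with h | h
      · rw [h]
        have := norm_le_pi_norm ![(4:ℝ) ^ (S l), (4:ℝ) ^ (-S l)] 0
        simpa using this
      · rw [h]
        have := norm_le_pi_norm ![(4:ℝ) ^ (S l), (4:ℝ) ^ (-S l)] 1
        simpa using this
  have h2 := congrArg Real.log h1
  have hne : ‖P l‖ ≠ 0 := by
    intro h; rw [h] at h1
    have : (0:ℝ) < (4:ℝ) ^ |S l| := by positivity
    linarith
  rw [Real.log_mul hne hne, Real.log_zpow, show (4:ℝ) = 2 ^ 2 by norm_num, Real.log_pow] at h2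
  rw [opNorm_eq]
  push_cast at h2
  linarith

/-- weights -/
def w (e : ℝ) (b : Bool) : ℝ := if b then 1 - e else e

def E (e : ℝ) (n : ℕ) (F : List Bool → ℝ) : ℝ :=
  ∑ ω : Fin n → Bool, (∏ i, w e (ω i)) * F (List.ofFn ω)

lemma E_zero (e : ℝ) (F : List Bool → ℝ) : E e 0 F = F [] := by
  simp [E]

lemma E_succ (e : ℝ) (n : ℕ) (F : List Bool → ℝ) :
    E e (n+1) F = E e n (fun l => (1 - e) * F (true :: l) + e * F (false :: l)) := by
  unfold E
  rw [← (Fin.consEquiv (fun _ : Fin (n+1) => Bool)).sum_comp, Fintype.sum_prod_type,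
    Fintype.sum_bool, ← Finset.sum_add_distrib]
  refine Finset.sum_congr rfl fun ω _ => ?_
  simp [Fin.consEquiv, Fin.prod_univ_succ, w]
  ring

lemma E_mono {e : ℝ} (h0 : 0 ≤ e) (h1 : e ≤ 1) (n : ℕ) {F G : List Bool → ℝ}
    (h : ∀ l, l.length = n → F l ≤ G l) : E e n F ≤ E e n G := by
  refine Finset.sum_le_sum fun ω _ => mul_le_mul_of_nonneg_left (h _ (by simp)) ?_
  refine Finset.prod_nonneg fun i _ => ?_
  unfold w; split_ifs <;> linarith

lemma E_add (e : ℝ) (n : ℕ) (F G : List Bool → ℝ) :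
    E e n (fun l => F l + G l) = E e n F + E e n G := by
  simp [E, mul_add, Finset.sum_add_distrib]

lemma E_mul (e : ℝ) (n : ℕ) (c : ℝ) (F : List Bool → ℝ) :
    E e n (fun l => c * F l) = c * E e n F := by
  simp only [E, Finset.mul_sum]
  exact Finset.sum_congr rfl fun _ _ => by ring

lemma E_const (e : ℝ) (n : ℕ) (c : ℝ) : E e n (fun _ => c) = c := by
  induction n with
  | zero => simp [E_zero]
  | succ n ih =>
    rw [E_succ]
    have : (1 - e) * c + e * c = c := by ring
    simp only [this, ih]

lemma E_S_zero (n : ℕ) : E 0 n (fun l => |(S l : ℝ)|) = n := by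
  have hS : E 0 n (fun l => (S l : ℝ)) = n := by
    induction n with
    | zero => simp [E_zero, S]
    | succ n ih =>
      rw [E_succ]
      simp [S, E_add, E_const, ih]
  apply le_antisymm
  · calc _ ≤ E 0 n (fun _ => (n:ℝ)) := E_mono le_rfl zero_le_one n (fun l hl => by
          have := abs_S_le l
          rw [hl] at this
          exact_mod_cast this)
      _ = _ := E_const _ _ _
  · calc (n:ℝ) = _ := hS.symm
      _ ≤ _ := E_mono le_rfl zero_le_one n (fun l _ => le_abs_self _)

lemma E_V {e c : ℝ} (hc : e * (c + 1) = 1) (n : ℕ) :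
    E e n (fun l => (S l : ℝ) ^ 2 + c * S l) = n * c := by
  induction n with
  | zero => simp [E_zero, S]
  | succ n ih =>
    rw [E_succ]
    have : (fun l : List Bool => (1 - e) * ((S (true :: l) : ℝ) ^ 2 + c * S (true :: l))
        + e * ((S (false :: l) : ℝ) ^ 2 + c * S (false :: l)))
        = fun l => ((S l : ℝ) ^ 2 + c * S l) + c := by
      funext l
      simp only [S]
      push_cast
      linear_combination (-(2 * (S l : ℝ)) - 1) * hc
    rw [this, E_add, E_const, ih]
    push_cast; ring

lemma E_abs_le {e c : ℝ} (h0 : 0 ≤ e) (h1 : e ≤ 1) (hc0 : 0 ≤ c) (hc : e * (c + 1) = 1) (n : ℕ)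
    {K : ℝ} (hK : 0 < K) :
    E e n (fun l => |(S l : ℝ)|) ≤ K⁻¹ * (n * c) + (K⁻¹ * (c ^ 2 / 4) + K + c / 2) := by
  rw [← E_V hc n, ← E_mul, ← E_const e n (K⁻¹ * (c ^ 2 / 4) + K + c / 2), ← E_add]
  refine E_mono h0 h1 n fun l _ => ?_
  generalize (S l : ℝ) = s
  have h2 : |s| ≤ |s + c / 2| + c / 2 := by
    have := abs_sub (s + c/2) (c/2)
    rw [abs_of_nonneg (by positivity : 0 ≤ c/2)] at this
    simpa using this
  have h3 : |s + c/2| ≤ K⁻¹ * (s + c/2)^2 + K := by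
    rw [← sq_abs]
    set x := |s + c/2|
    have : K⁻¹ * x^2 + K - x = K⁻¹ * ((x - K/2)^2 + 3/4*K^2) := by field_simp; ring
    have : 0 ≤ K⁻¹ * ((x - K/2)^2 + 3/4*K^2) := by positivity
    linarith
  have : K⁻¹ * (s + c/2)^2 = K⁻¹ * (s^2 + c*s) + K⁻¹ * (c^2/4) := by ring
  linarith

lemma tendsto_E {e c : ℝ} (h0 : 0 ≤ e) (h1 : e ≤ 1) (hc0 : 0 ≤ c) (hc : e * (c + 1) = 1) :
    Tendsto (fun n : ℕ => (n:ℝ)⁻¹ * E e n (fun l => |(S l : ℝ)|)) atTop (𝓝 0) := by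
  have hn : ∀ n, 0 ≤ E e n (fun l => |(S l : ℝ)|) := fun n => by
    rw [← E_const e n 0]
    refine E_mono h0 h1 n fun l _ => ?_
    simp
  have hs : Tendsto (fun n : ℕ => (√(n:ℝ))⁻¹) atTop (𝓝 0) :=
    (tendsto_inv_atTop_zero.comp Real.tendsto_sqrt_atTop).comp tendsto_natCast_atTop_atTop
  have hlim : Tendsto (fun n : ℕ => (√(n:ℝ))⁻¹ * c + ((√(n:ℝ))⁻¹ ^ 3 * (c^2/4) + (√(n:ℝ))⁻¹
      + (√(n:ℝ))⁻¹ ^ 2 * (c/2))) atTop (𝓝 0) := by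
    have := (hs.mul_const c).add ((((hs.pow 3).mul_const (c^2/4)).add hs).add
      ((hs.pow 2).mul_const (c/2)))
    simpa using this
  refine tendsto_of_tendsto_of_tendsto_of_le_of_le' tendsto_const_nhds hlim ?_ ?_
  · exact Eventually.of_forall fun n => mul_nonneg (by positivity) (hn n)
  · filter_upwards [eventually_gt_atTop 0] with n hn0
    have hp : (0:ℝ) < √(n:ℝ) := Real.sqrt_pos.2 (by exact_mod_cast hn0)
    have hsq : (n:ℝ) = √(n:ℝ)^2 := (Real.sq_sqrt (by positivity)).symm
    calc _ ≤ (n:ℝ)⁻¹ * _ := mul_le_mul_of_nonneg_left (E_abs_le h0 h1 hc0 hc n hp) (by positivity)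
      _ = _ := by
        generalize √(n:ℝ) = r at *
        rw [hsq]; field_simp

def mu (e : ℝ) : Measure Bool :=
  ENNReal.ofReal (1 - e) • Measure.dirac true + ENNReal.ofReal e • Measure.dirac false

lemma mu_prob {e : ℝ} (h0 : 0 ≤ e) (h1 : e ≤ 1) : IsProbabilityMeasure (mu e) := by
  constructor
  simp [mu]
  rw [← ENNReal.ofReal_add (by linarith) h0]; simp

lemma mu_real {e : ℝ} (h0 : 0 ≤ e) (h1 : e ≤ 1) (b : Bool) : mu e {b} = ENNReal.ofReal (w e b) := by
  cases b <;> simp [mu, w]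

lemma meas_f : Measurable f := measurable_from_top

lemma lyapSeq_eq {e : ℝ} (h0 : 0 ≤ e) (h1 : e ≤ 1) (q : Measure SL2) [SigmaFinite q]
    (hq : q = (mu e).map f) (n : ℕ) :
    lyapSeq id (fun α : SL2 => opNorm (α : Matrix (Fin 2) (Fin 2) ℝ)) q n
      = Real.log 2 * ((n:ℝ)⁻¹ * E e n (fun l => |(S l : ℝ)|)) := by
  have := mu_prob h0 h1
  subst hq
  have hemb : MeasurableEmbedding (fun (ω : Fin n → Bool) i => f (ω i)) := by
    refine ⟨fun a b h => ?_, ?_, ?_⟩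
    · funext i; exact f_inj (congrFun h i)
    · exact measurable_pi_lambda _ fun i => meas_f.comp (measurable_pi_apply i)
    · intro s _; exact (Set.toFinite _).measurableSet
  unfold lyapSeq
  rw [← Measure.pi_map_pi (μ := fun _ : Fin n => mu e) (f := fun _ => f)
    (fun _ => meas_f.aemeasurable), hemb.integral_map, integral_fintype (by exact Integrable.of_finite)]
  have : ∀ ω : Fin n → Bool, Real.log (opNorm
      ((List.ofFn fun i => id (f (ω i))).reverse.prod : SL2)) 
      = |(S (List.ofFn ω) : ℝ)| * Real.log 2 := by
    intro ω
    rw [← log_opNorm, P, List.map_ofFn]; rfl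
  simp only [this]
  rw [mul_left_comm]
  congr 1
  unfold E
  rw [Finset.mul_sum]
  refine Finset.sum_congr rfl fun ω _ => ?_
  have hm : (Measure.pi fun _ : Fin n => mu e).real {ω} = ∏ i, w e (ω i) := by
    rw [Measure.real, Measure.pi_singleton, ENNReal.toReal_prod]
    refine Finset.prod_congr rfl fun i _ => ?_
    rw [mu_real h0 h1, ENNReal.toReal_ofReal]
    unfold w; split_ifs <;> linarith
  rw [hm, smul_eq_mul]; ring

def q (e : ℝ) (h0 : 0 ≤ e) (h1 : e ≤ 1) : ProbabilityMeasure SL2 :=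
  ⟨(mu e).map f, by
    have := mu_prob h0 h1
    exact Measure.isProbabilityMeasure_map meas_f.aemeasurable⟩

lemma q_moment (e : ℝ) (h0 : 0 ≤ e) (h1 : e ≤ 1) :
    ∫⁻ α, ENNReal.ofReal (dSL 1 α) ∂(q e h0 h1 : Measure SL2) < ⊤ := by
  refine lt_of_le_of_lt (lintegral_map_le _ _) ?_
  simp [mu, lintegral_add_measure, lintegral_smul_measure, ENNReal.mul_lt_top_iff]

lemma q_W1 (e : ℝ) (h0 : 0 ≤ e) (h1 : e ≤ 1) :
    W1 dSL (q e h0 h1 : Measure SL2) (q 0 le_rfl zero_le_one : Measure SL2)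
      ≤ ENNReal.ofReal (e * dSL R A) := by
  have := mu_prob h0 h1
  have hm : Measurable (fun b : Bool => (f b, f true)) := measurable_from_top
  unfold W1
  refine iInf_le_of_le ((mu e).map (fun b => (f b, f true))) (iInf_le_of_le ?_ (iInf_le_of_le ?_ ?_))
  · rw [Measure.map_map measurable_fst hm]; rfl
  · rw [Measure.map_map measurable_snd hm]
    change Measure.map (fun _ => f true) (mu e) = Measure.map f (mu 0)
    rw [Measure.map_const, measure_univ, one_smul, mu, sub_zero, ENNReal.ofReal_one, ENNReal.ofReal_zero, one_smul,
      zero_smul, add_zero, Measure.map_dirac']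
    exact meas_f
  · refine (lintegral_map_le _ _).trans ?_
    rw [ENNReal.ofReal_mul h0]
    simp [mu, lintegral_add_measure, lintegral_smul_measure, f, dSL, opNorm_eq]

end LyapAux

/-- **Discontinuity of `λ₊` in the Wasserstein topology.**
There are Borel probability measures `q` and `q_n` on `SL(2,ℝ)`, all with finite first
moment (elements of `P₁(SL(2,ℝ))`), such that `W₁(q_n, q) → 0`, `λ₊(q_n) = 0` for every
`n`, and `λ₊(q) > 0`. -/
theorem lyapPlus_not_continuous_wasserstein :
    ∃ (q : ProbabilityMeasure SL2) (qn : ℕ → ProbabilityMeasure SL2),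
      (∫⁻ α, ENNReal.ofReal (dSL 1 α) ∂(q : Measure SL2) < ⊤) ∧
      (∀ n, ∫⁻ α, ENNReal.ofReal (dSL 1 α) ∂(qn n : Measure SL2) < ⊤) ∧
      Tendsto (fun n => W1 dSL (qn n : Measure SL2) (q : Measure SL2)) atTop (𝓝 0) ∧
      (∀ n, lyapPlus (qn n : Measure SL2) = 0) ∧
      0 < lyapPlus (q : Measure SL2) := by
  have h0 : ∀ n : ℕ, (0:ℝ) ≤ 1 / ((n:ℝ) + 1) := fun n => by positivity
  have h1 : ∀ n : ℕ, 1 / ((n:ℝ) + 1) ≤ 1 := fun n => by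
    rw [div_le_one (by positivity)]; linarith [(Nat.cast_nonneg n : (0:ℝ) ≤ n)]
  refine ⟨LyapAux.q 0 le_rfl zero_le_one, fun n => LyapAux.q (1 / ((n:ℝ) + 1)) (h0 n) (h1 n),
    LyapAux.q_moment _ _ _, fun n => LyapAux.q_moment _ _ _, ?_, ?_, ?_⟩
  · refine tendsto_of_tendsto_of_tendsto_of_le_of_le tendsto_const_nhds ?_
      (fun n => bot_le) (fun n => LyapAux.q_W1 _ (h0 n) (h1 n))
    have := ENNReal.tendsto_ofReal
      ((tendsto_one_div_add_atTop_nhds_zero_nat (𝕜 := ℝ)).mul_const (dSL LyapAux.R LyapAux.A))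
    simpa using this
  · intro n
    unfold lyapPlus lyapCocycle
    refine Tendsto.limUnder_eq ?_
    have := (LyapAux.tendsto_E (h0 n) (h1 n) (Nat.cast_nonneg n) (by field_simp)).const_mul
      (Real.log 2)
    rw [mul_zero] at this
    exact this.congr fun k => (LyapAux.lyapSeq_eq (h0 n) (h1 n) (LyapAux.q _ (h0 n) (h1 n) : Measure SL2) rfl k).symm
  · have : lyapPlus (LyapAux.q 0 le_rfl zero_le_one : Measure SL2) = Real.log 2 := by
      unfold lyapPlus lyapCocycle
      refine Tendsto.limUnder_eq (tendsto_const_nhds.congr' ?_)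
      filter_upwards [eventually_gt_atTop 0] with k hk
      rw [LyapAux.lyapSeq_eq le_rfl zero_le_one (LyapAux.q 0 le_rfl zero_le_one : Measure SL2) rfl k, LyapAux.E_S_zero]
      have : (k:ℝ) ≠ 0 := by exact_mod_cast hk.ne'
      field_simp
    rw [this]
    exact Real.log_pos (by norm_num)
end
end

section
/- Let X = SL(2,ℝ)⁵ with the product metric d_∞((α₁,…,α₅),(β₁,…,β₅)) = max_i ‖α_i − β_i‖, and let B : X → SL(2,ℝ) be the block cocycle B(a₀,a₁,a₂,a₃,a₄) = a₄a₃a₂a₁a₀. There exist a Borel probability measure q ∈ P₁(X) and a sequence (q_n)_{n∈ℕ} in P₁(X) such that W₁(q_n, q) → 0, λ₊(B, q) > 0, and λ₊(B, q_n) = 0 for every n; in particular λ₊(B, q_n) does not converge to λ₊(B, q). -/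
open MeasureTheory Filter Topology Matrix
open scoped ENNReal

noncomputable section

/-- `X = SL(2,ℝ)⁵`. -/
abbrev X5 : Type := Fin 5 → SL2

/-- The product (sup) metric `d_∞` on `SL(2,ℝ)⁵`. -/
noncomputable def dX5 (a b : X5) : ℝ :=
  Finset.univ.sup' Finset.univ_nonempty fun i => dSL (a i) (b i)

/-- The block cocycle `B(a₀,a₁,a₂,a₃,a₄) = a₄a₃a₂a₁a₀`. -/
noncomputable def B5 (a : X5) : SL2 := (List.ofFn a).reverse.prod


/-! ### Auxiliary material -/

namespace Kifer

instance instSing : MeasurableSingletonClass SL2 := by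
  refine ⟨fun a => ?_⟩
  have hb : BorelSpace SL2 := ⟨rfl⟩
  have hc : Continuous (fun α : SL2 => (α : Matrix (Fin 2) (Fin 2) ℝ)) :=
    continuous_induced_dom
  have h : ({a} : Set SL2) = (fun α : SL2 => (α : Matrix (Fin 2) (Fin 2) ℝ)) ⁻¹' {(a : Matrix (Fin 2) (Fin 2) ℝ)} := by
    ext x
    simp only [Set.mem_singleton_iff, Set.mem_preimage]
    exact ⟨fun h => by rw [h], fun h => Subtype.ext h⟩
  rw [h]
  exact (isClosed_singleton.preimage hc).measurableSet

/-- The hyperbolic matrix. -/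
def H : SL2 := ⟨!![2, 0; 0, 2⁻¹], by simp [Matrix.det_fin_two]⟩

/-- The quarter turn. -/
def R : SL2 := ⟨!![0, -1; 1, 0], by simp [Matrix.det_fin_two]⟩

/-- Choice between the two. -/
def g : Bool → SL2 := fun b => if b then H else R

/-- The two points of `X5`. -/
def φ : Bool → X5 := fun b => ![g b, 1, 1, 1, 1]

lemma B5_φ (b : Bool) : B5 (φ b) = g b := by
  simp [B5, φ, List.ofFn_succ]

lemma g_inj : Function.Injective g := by
  have : H ≠ R := by
    intro h
    have := congrArg (fun α : SL2 => (α : Matrix (Fin 2) (Fin 2) ℝ) 0 0) h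
    simp [H, R] at this
  intro a b h
  cases a <;> cases b <;> simp_all [g, eq_comm]

lemma φ_inj : Function.Injective φ := by
  intro a b h
  exact g_inj (congrFun h 0)

lemma emb_of_inj {α β : Type*} [MeasurableSpace α] [DiscreteMeasurableSpace α] [Countable α]
    [MeasurableSpace β] [MeasurableSingletonClass β] {f : α → β} (hf : Function.Injective f) :
    MeasurableEmbedding f where
  injective := hf
  measurable := Measurable.of_discrete
  measurableSet_image' := fun {s} _ => ((Set.to_countable s).image f).measurableSet

/-- The Bernoulli measure. -/
def ber (p : ℝ) : Measure Bool :=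
  ENNReal.ofReal (1 - p) • Measure.dirac true + ENNReal.ofReal p • Measure.dirac false

lemma ber_prob {p : ℝ} (h0 : 0 ≤ p) (h1 : p ≤ 1) : IsProbabilityMeasure (ber p) := by
  refine ⟨?_⟩
  simp only [ber, Measure.coe_add, Measure.coe_smul, Pi.add_apply, Pi.smul_apply, measure_univ,
    smul_eq_mul, mul_one]
  rw [← ENNReal.ofReal_add (by linarith) h0]
  simp

lemma integral_ber {p : ℝ} (h0 : 0 ≤ p) (h1 : p ≤ 1) (f : Bool → ℝ) :
    ∫ b, f b ∂(ber p) = (1 - p) * f true + p * f false := by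
  rw [ber, integral_add_measure]
  · simp [integral_smul_measure, ENNReal.toReal_ofReal h0, ENNReal.toReal_ofReal (sub_nonneg.2 h1)]
  · exact (integrable_dirac (by simp)).smul_measure (by simp)
  · exact (integrable_dirac (by simp)).smul_measure (by simp)

lemma lintegral_ber {p : ℝ} (f : Bool → ℝ≥0∞) :
    ∫⁻ b, f b ∂(ber p) = ENNReal.ofReal (1 - p) * f true + ENNReal.ofReal p * f false := by
  simp [ber, lintegral_add_measure, lintegral_smul_measure]

lemma integral_succ {p : ℝ} (h0 : 0 ≤ p) (h1 : p ≤ 1) (n : ℕ) (f : (Fin (n + 1) → Bool) → ℝ) :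
    ∫ ω, f ω ∂(Measure.pi fun _ => ber p) =
      (1 - p) * ∫ ω : Fin n → Bool, f (Fin.cons true ω) ∂(Measure.pi fun _ => ber p) +
      p * ∫ ω : Fin n → Bool, f (Fin.cons false ω) ∂(Measure.pi fun _ => ber p) := by
  have := ber_prob h0 h1
  rw [← ((measurePreserving_piFinSuccAbove (fun _ : Fin (n + 1) => ber p) 0).symm).integral_comp',
    integral_prod _ Integrable.of_finite, integral_ber h0 h1]
  simp [MeasurableEquiv.piFinSuccAbove_symm_apply, Fin.insertNthEquiv]

/-- The exponent of the diagonal part. -/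
def F : (n : ℕ) → (Fin n → Bool) → ℤ
  | 0, _ => 0
  | n + 1, ω => if ω 0 then F n (Fin.tail ω) + 1 else - F n (Fin.tail ω)

lemma F_abs : ∀ (n : ℕ) (ω : Fin n → Bool), |(F n ω : ℝ)| ≤ n
  | 0, _ => by simp [F]
  | n + 1, ω => by
    have := F_abs n (Fin.tail ω)
    rw [F]
    split_ifs
    · push_cast
      refine (abs_add_le _ _).trans ?_
      simpa using this
    · push_cast
      rw [abs_neg]
      linarith

/-- Diagonal matrix. -/
def D (s : ℤ) : Matrix (Fin 2) (Fin 2) ℝ := Matrix.diagonal ![(2 : ℝ) ^ s, (2 : ℝ) ^ (-s)]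

lemma D_H (s : ℤ) : D s * (H : Matrix (Fin 2) (Fin 2) ℝ) = D (s + 1) := by
  have h2 : (2 : ℝ) ≠ 0 := two_ne_zero
  ext i j
  fin_cases i <;> fin_cases j <;>
    simp [D, H, Matrix.mul_apply, zpow_add₀ h2, Matrix.diagonal, mul_comm]

lemma D_R (s : ℤ) : D s * (R : Matrix (Fin 2) (Fin 2) ℝ) = (R : Matrix (Fin 2) (Fin 2) ℝ) * D (-s) := by
  ext i j
  fin_cases i <;> fin_cases j <;>
    simp [D, R, Matrix.mul_apply, Matrix.diagonal]

lemma R_unitary : (R : Matrix (Fin 2) (Fin 2) ℝ) ∈ unitary (Matrix (Fin 2) (Fin 2) ℝ) := by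
  rw [Unitary.mem_iff]
  constructor <;>
  · ext i j
    fin_cases i <;> fin_cases j <;> simp [R, Matrix.mul_apply, Matrix.star_apply]

lemma prod_form : ∀ (n : ℕ) (ω : Fin n → Bool),
    ∃ U ∈ unitary (Matrix (Fin 2) (Fin 2) ℝ),
      (((List.ofFn fun i => g (ω i)).reverse.prod : SL2) : Matrix (Fin 2) (Fin 2) ℝ) = U * D (F n ω)
  | 0, _ => ⟨1, one_mem _, by
      have : D 0 = 1 := by
        ext i j
        fin_cases i <;> fin_cases j <;> simp [D]
      simp [F, this]⟩
  | n + 1, ω => by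
    obtain ⟨U, hU, h⟩ := prod_form n (Fin.tail ω)
    have e : (((List.ofFn fun i => g (ω i)).reverse.prod : SL2) : Matrix (Fin 2) (Fin 2) ℝ)
        = U * D (F n (Fin.tail ω)) * (g (ω 0) : Matrix (Fin 2) (Fin 2) ℝ) := by
      rw [← h, List.ofFn_succ, List.reverse_cons, List.prod_append, List.prod_singleton,
        Matrix.SpecialLinearGroup.coe_mul]
      rfl
    rw [e, F]
    by_cases hω : ω 0 = true
    · refine ⟨U, hU, ?_⟩
      simp only [hω, if_true, g]
      rw [mul_assoc, D_H]
    · refine ⟨U * R, mul_mem hU R_unitary, ?_⟩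
      simp only [hω, g]
      simp only [Bool.false_eq_true, if_false]
      rw [mul_assoc, D_R, mul_assoc]

open scoped Matrix.Norms.L2Operator in
lemma opNorm_form (U : Matrix (Fin 2) (Fin 2) ℝ) (hU : U ∈ unitary (Matrix (Fin 2) (Fin 2) ℝ))
    (s : ℤ) : opNorm (U * D s) = (2 : ℝ) ^ |s| := by
  have : opNorm (U * D s) = ‖U * D s‖ := rfl
  rw [this, CStarRing.norm_mem_unitary_mul _ hU, D, Matrix.l2_opNorm_diagonal]
  have h1 : (1 : ℝ) ≤ 2 := one_le_two
  have hn : ∀ t : ℤ, ‖(2 : ℝ) ^ t‖ = 2 ^ t := fun t => Real.norm_of_nonneg (by positivity)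
  apply le_antisymm
  · refine (pi_norm_le_iff_of_nonneg (by positivity)).2 fun i => ?_
    fin_cases i
    · simpa [hn] using zpow_le_zpow_right₀ h1 (le_abs_self s)
    · have := zpow_le_zpow_right₀ h1 (neg_le_abs s)
      simpa [hn] using this
  · rcases abs_choice s with h | h <;> rw [h]
    · have := norm_le_pi_norm ![(2 : ℝ) ^ s, (2 : ℝ) ^ (-s)] 0
      simpa [hn] using this
    · have := norm_le_pi_norm ![(2 : ℝ) ^ s, (2 : ℝ) ^ (-s)] 1
      simpa [hn] using this

lemma log_form (n : ℕ) (ω : Fin n → Bool) :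
    Real.log (opNorm (((List.ofFn fun i => g (ω i)).reverse.prod : SL2) : Matrix (Fin 2) (Fin 2) ℝ))
      = |(F n ω : ℝ)| * Real.log 2 := by
  obtain ⟨U, hU, h⟩ := prod_form n ω
  rw [h, opNorm_form U hU, Real.log_zpow]
  push_cast
  rfl

/-- The measures on `X5`. -/
def μ (p : ℝ) (h0 : 0 ≤ p) (h1 : p ≤ 1) : ProbabilityMeasure X5 :=
  ⟨(ber p).map φ, by
    have := ber_prob h0 h1
    exact Measure.isProbabilityMeasure_map Measurable.of_discrete.aemeasurable⟩

lemma lyapSeq_eq (p : ℝ) (h0 : 0 ≤ p) (h1 : p ≤ 1) (n : ℕ) :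
    lyapSeq B5 (fun α : SL2 => opNorm (α : Matrix (Fin 2) (Fin 2) ℝ)) (μ p h0 h1 : Measure X5) n
      = (n : ℝ)⁻¹ * ((∫ ω, |(F n ω : ℝ)| ∂(Measure.pi fun _ => ber p)) * Real.log 2) := by
  have := ber_prob h0 h1
  have hs : IsProbabilityMeasure ((ber p).map φ) := (μ p h0 h1).2
  have hpi : (Measure.pi fun _ : Fin n => (μ p h0 h1 : Measure X5)) =
      (Measure.pi fun _ : Fin n => ber p).map (fun ω i => φ (ω i)) :=
    (Measure.pi_map_pi (fun _ => Measurable.of_discrete.aemeasurable)).symm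
  have hemb : MeasurableEmbedding (fun (ω : Fin n → Bool) i => φ (ω i)) :=
    emb_of_inj (fun a b h => funext fun i => φ_inj (congrFun h i))
  unfold lyapSeq
  rw [hpi, hemb.integral_map, ← integral_mul_const]
  simp only [B5_φ, log_form]

lemma mean_succ {p : ℝ} (h0 : 0 ≤ p) (h1 : p ≤ 1) (n : ℕ) :
    ∫ ω, (F (n + 1) ω : ℝ) ∂(Measure.pi fun _ => ber p) =
      (1 - 2 * p) * (∫ ω, (F n ω : ℝ) ∂(Measure.pi fun _ => ber p)) + (1 - p) := by
  have := ber_prob h0 h1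
  rw [integral_succ h0 h1]
  simp only [F, Fin.cons_zero, Fin.tail_cons, if_true, Bool.false_eq_true, if_false]
  push_cast
  rw [integral_add Integrable.of_finite Integrable.of_finite, integral_neg]
  simp
  ring

lemma sq_succ {p : ℝ} (h0 : 0 ≤ p) (h1 : p ≤ 1) (n : ℕ) :
    ∫ ω, (F (n + 1) ω : ℝ) ^ 2 ∂(Measure.pi fun _ => ber p) =
      (∫ ω, (F n ω : ℝ) ^ 2 ∂(Measure.pi fun _ => ber p)) +
      (1 - p) * (2 * (∫ ω, (F n ω : ℝ) ∂(Measure.pi fun _ => ber p)) + 1) := by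
  have := ber_prob h0 h1
  rw [integral_succ h0 h1]
  simp only [F, Fin.cons_zero, Fin.tail_cons, if_true, Bool.false_eq_true, if_false]
  push_cast
  simp only [add_sq, neg_sq, mul_one, one_pow]
  rw [integral_add Integrable.of_finite Integrable.of_finite,
    integral_add Integrable.of_finite Integrable.of_finite, integral_const_mul]
  simp
  ring

lemma mean_zero (n : ℕ) :
    ∫ ω, (F n ω : ℝ) ∂(Measure.pi fun _ => ber 0) = n := by
  induction n with
  | zero => simp [F]
  | succ n ih => rw [mean_succ le_rfl zero_le_one, ih]; push_cast; ring

lemma abs_zero' (n : ℕ) :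
    ∫ ω, |(F n ω : ℝ)| ∂(Measure.pi fun _ => ber 0) = n := by
  have := ber_prob le_rfl (zero_le_one (α := ℝ))
  apply le_antisymm
  · calc _ ≤ ∫ ω : Fin n → Bool, (n : ℝ) ∂(Measure.pi fun _ => ber 0) :=
        integral_mono Integrable.of_finite Integrable.of_finite (F_abs n)
      _ = n := by simp
  · calc (n : ℝ) = _ := (mean_zero n).symm
      _ ≤ _ := integral_mono Integrable.of_finite Integrable.of_finite (fun ω => le_abs_self _)

lemma mean_le {p : ℝ} (h0 : 0 < p) (h1 : p ≤ 1 / 2) (n : ℕ) :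
    ∫ ω, (F n ω : ℝ) ∂(Measure.pi fun _ => ber p) ≤ (2 * p)⁻¹ := by
  induction n with
  | zero => simp [F]; positivity
  | succ n ih =>
    rw [mean_succ h0.le (by linarith)]
    have h2 : (1 - 2 * p) * (∫ ω, (F n ω : ℝ) ∂(Measure.pi fun _ => ber p))
      ≤ (1 - 2 * p) * (2 * p)⁻¹ := mul_le_mul_of_nonneg_left ih (by linarith)
    have h3 : (2 * p) * (2 * p)⁻¹ = 1 := mul_inv_cancel₀ (by positivity)
    nlinarith

lemma sq_le {p : ℝ} (h0 : 0 < p) (h1 : p ≤ 1 / 2) (n : ℕ) :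
    ∫ ω, (F n ω : ℝ) ^ 2 ∂(Measure.pi fun _ => ber p) ≤ n * (2 * (2 * p)⁻¹ + 1) := by
  induction n with
  | zero => simp [F]
  | succ n ih =>
    rw [sq_succ h0.le (by linarith)]
    have hm := mean_le h0 h1 n
    have hc : 0 ≤ (2 * p)⁻¹ := by positivity
    have : (1 - p) * (2 * (∫ ω, (F n ω : ℝ) ∂(Measure.pi fun _ => ber p)) + 1)
        ≤ (1 - p) * (2 * (2 * p)⁻¹ + 1) :=
      mul_le_mul_of_nonneg_left (by linarith) (by linarith)
    have h3 : (1 - p) * (2 * (2 * p)⁻¹ + 1) ≤ 1 * (2 * (2 * p)⁻¹ + 1) :=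
      mul_le_mul_of_nonneg_right (by linarith) (by linarith)
    push_cast
    linarith

lemma abs_le' {p : ℝ} (h0 : 0 < p) (h1 : p ≤ 1 / 2) (n : ℕ) :
    (n : ℝ)⁻¹ * ∫ ω, |(F n ω : ℝ)| ∂(Measure.pi fun _ => ber p) ≤
      ((2 * p)⁻¹ + 1) * (√(n : ℝ))⁻¹ := by
  have := ber_prob h0.le (show p ≤ 1 by linarith)
  rcases Nat.eq_zero_or_pos n with rfl | hn
  · simp
  have hn' : (0 : ℝ) < n := by exact_mod_cast hn
  set t := √(n : ℝ) with ht
  have ht0 : 0 < t := Real.sqrt_pos.2 hn'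
  have htt : t * t = n := Real.mul_self_sqrt hn'.le
  have hb : ∫ ω, |(F n ω : ℝ)| ∂(Measure.pi fun _ => ber p) ≤
      ∫ ω, ((2 * t)⁻¹ * (F n ω : ℝ) ^ 2 + t / 2) ∂(Measure.pi fun _ => ber p) := by
    refine integral_mono Integrable.of_finite Integrable.of_finite (fun ω => ?_)
    have h := sq_nonneg (|(F n ω : ℝ)| - t)
    have e : (2 * t)⁻¹ * (F n ω : ℝ) ^ 2 + t / 2 - |(F n ω : ℝ)|
        = (2 * t)⁻¹ * (|(F n ω : ℝ)| - t) ^ 2 := by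
      rw [sub_sq, sq_abs]
      field_simp
      ring
    have : 0 ≤ (2 * t)⁻¹ * (|(F n ω : ℝ)| - t) ^ 2 := by positivity
    show |(F n ω : ℝ)| ≤ (2 * t)⁻¹ * (F n ω : ℝ) ^ 2 + t / 2
    linarith
  rw [integral_add Integrable.of_finite Integrable.of_finite, integral_const_mul] at hb
  simp only [integral_const, probReal_univ, smul_eq_mul, one_mul] at hb
  have hs := mul_le_mul_of_nonneg_left (sq_le h0 h1 n) (show 0 ≤ (2 * t)⁻¹ by positivity)
  have hfin : ∫ ω, |(F n ω : ℝ)| ∂(Measure.pi fun _ => ber p) ≤ t * ((2 * p)⁻¹ + 1) := by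
    have e : (2 * t)⁻¹ * (n * (2 * (2 * p)⁻¹ + 1)) + t / 2 = t * ((2 * p)⁻¹ + 1) := by
      rw [← htt]
      field_simp
      ring
    linarith
  calc _ ≤ (n : ℝ)⁻¹ * (t * ((2 * p)⁻¹ + 1)) :=
        mul_le_mul_of_nonneg_left hfin (by positivity)
    _ = _ := by
      rw [← htt]
      field_simp

lemma lyap_zero {p : ℝ} (h0 : 0 < p) (h1 : p ≤ 1 / 2) :
    lyapCocycle B5 (fun α : SL2 => opNorm (α : Matrix (Fin 2) (Fin 2) ℝ))
      (μ p h0.le (by linarith) : Measure X5) = 0 := by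
  refine Tendsto.limUnder_eq ?_
  have hlim : Tendsto (fun n : ℕ => ((2 * p)⁻¹ + 1) * (√(n : ℝ))⁻¹ * Real.log 2) atTop (𝓝 0) := by
    have h : Tendsto (fun n : ℕ => (√(n : ℝ))⁻¹) atTop (𝓝 0) :=
      tendsto_inv_atTop_zero.comp (Real.tendsto_sqrt_atTop.comp tendsto_natCast_atTop_atTop)
    simpa using (h.const_mul ((2 * p)⁻¹ + 1)).mul_const (Real.log 2)
  have hl : 0 ≤ Real.log 2 := Real.log_nonneg one_le_two
  refine squeeze_zero (fun n => ?_) (fun n => ?_) hlim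
  · rw [lyapSeq_eq]
    have : 0 ≤ ∫ ω, |(F n ω : ℝ)| ∂(Measure.pi fun _ => ber p) :=
      integral_nonneg fun ω => abs_nonneg _
    positivity
  · rw [lyapSeq_eq, ← mul_assoc]
    exact mul_le_mul_of_nonneg_right (abs_le' h0 h1 n) hl

lemma lyap_pos :
    lyapCocycle B5 (fun α : SL2 => opNorm (α : Matrix (Fin 2) (Fin 2) ℝ))
      (μ 0 le_rfl zero_le_one : Measure X5) = Real.log 2 := by
  refine Tendsto.limUnder_eq ?_
  refine tendsto_const_nhds.congr' ?_
  filter_upwards [eventually_gt_atTop 0] with n hn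
  have hn' : (n : ℝ) ≠ 0 := by exact_mod_cast hn.ne'
  rw [lyapSeq_eq, abs_zero']
  field_simp

lemma moment (p : ℝ) (h0 : 0 ≤ p) (h1 : p ≤ 1) :
    ∫⁻ x, ENNReal.ofReal (dX5 (fun _ => 1) x) ∂(μ p h0 h1 : Measure X5) < ⊤ := by
  show ∫⁻ x, ENNReal.ofReal (dX5 (fun _ => 1) x) ∂((ber p).map φ) < ⊤
  rw [(emb_of_inj φ_inj).lintegral_map, lintegral_ber]
  exact ENNReal.add_lt_top.2 ⟨ENNReal.mul_lt_top ENNReal.ofReal_lt_top ENNReal.ofReal_lt_top,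
    ENNReal.mul_lt_top ENNReal.ofReal_lt_top ENNReal.ofReal_lt_top⟩

lemma dX5_self (x : X5) : dX5 x x = 0 := by
  simp [dX5, dSL, opNorm]

lemma W1_le (p : ℝ) (h0 : 0 ≤ p) (h1 : p ≤ 1) :
    W1 dX5 (μ p h0 h1 : Measure X5) (μ 0 le_rfl zero_le_one : Measure X5) ≤
      ENNReal.ofReal p * ENNReal.ofReal (dX5 (φ false) (φ true)) := by
  have := ber_prob h0 h1
  have hinj : Function.Injective (fun b => (φ b, φ true)) := fun a b h =>
    φ_inj (congrArg Prod.fst h)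
  have hm : Measurable (fun b => (φ b, φ true)) := Measurable.of_discrete
  unfold W1
  refine iInf_le_of_le ((ber p).map (fun b => (φ b, φ true))) ?_
  refine iInf_le_of_le ?_ (iInf_le_of_le ?_ ?_)
  · rw [Measure.map_map measurable_fst hm]
    rfl
  · rw [Measure.map_map measurable_snd hm]
    show (ber p).map (fun _ => φ true) = (ber 0).map φ
    rw [Measure.map_const, measure_univ, one_smul]
    have hφ : Measurable φ := Measurable.of_discrete
    simp [ber, Measure.map_dirac' hφ]
  · rw [(emb_of_inj hinj).lintegral_map, lintegral_ber]
    simp [dX5_self]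

end Kifer

/-- **Discontinuity of `λ₊(B,·)` in the Wasserstein topology on `P₁(SL(2,ℝ)⁵)`.**
There are Borel probability measures `q`, `q_n` on `X = SL(2,ℝ)⁵` with finite first
moment such that `W₁(q_n, q) → 0`, `λ₊(B, q) > 0`, and `λ₊(B, q_n) = 0` for every `n`;
in particular `λ₊(B, q_n)` does not converge to `λ₊(B, q)`. -/
theorem lyapPlus_block5_not_continuous_wasserstein :
    ∃ (q : ProbabilityMeasure X5) (qn : ℕ → ProbabilityMeasure X5),
      (∫⁻ x, ENNReal.ofReal (dX5 (fun _ => 1) x) ∂(q : Measure X5) < ⊤) ∧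
      (∀ n, ∫⁻ x, ENNReal.ofReal (dX5 (fun _ => 1) x) ∂(qn n : Measure X5) < ⊤) ∧
      Tendsto (fun n => W1 dX5 (qn n : Measure X5) (q : Measure X5)) atTop (𝓝 0) ∧
      0 < lyapCocycle B5 (fun α : SL2 => opNorm (α : Matrix (Fin 2) (Fin 2) ℝ))
            (q : Measure X5) ∧
      (∀ n, lyapCocycle B5 (fun α : SL2 => opNorm (α : Matrix (Fin 2) (Fin 2) ℝ))
            (qn n : Measure X5) = 0) := by
  have hp0 : ∀ n : ℕ, (0 : ℝ) < 1 / ((n : ℝ) + 2) := fun n => by positivity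
  have hp1 : ∀ n : ℕ, 1 / ((n : ℝ) + 2) ≤ 1 / 2 := fun n => by
    apply one_div_le_one_div_of_le two_pos
    have : (0 : ℝ) ≤ n := n.cast_nonneg
    linarith
  refine ⟨Kifer.μ 0 le_rfl zero_le_one,
    fun n => Kifer.μ (1 / ((n : ℝ) + 2)) (hp0 n).le ((hp1 n).trans (by norm_num)),
    Kifer.moment _ _ _, fun n => Kifer.moment _ _ _, ?_, ?_, fun n => Kifer.lyap_zero (hp0 n) (hp1 n)⟩
  · have h1 : Tendsto (fun n : ℕ => 1 / ((n : ℝ) + 2)) atTop (𝓝 0) :=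
      tendsto_const_nhds.div_atTop
        (tendsto_atTop_add_const_right _ _ tendsto_natCast_atTop_atTop)
    have h2 := ENNReal.Tendsto.mul_const (b := ENNReal.ofReal (dX5 (Kifer.φ false) (Kifer.φ true)))
      (ENNReal.tendsto_ofReal h1) (Or.inr ENNReal.ofReal_ne_top)
    rw [ENNReal.ofReal_zero, zero_mul] at h2
    exact tendsto_of_tendsto_of_tendsto_of_le_of_le tendsto_const_nhds h2 (fun _ => zero_le)
      (fun n => Kifer.W1_le _ _ _)
  · rw [Kifer.lyap_pos]
    exact Real.log_pos one_lt_two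
end
end

section
/- Let q be a Borel probability measure on SL(2,ℝ) with ∫ log‖α‖ dq(α) < ∞. Suppose that every matrix α in the support of q maps the pair of coordinate axes {ℝ·(1,0), ℝ·(0,1)} into itself (i.e. each α in the support either preserves both coordinate axes or swaps them), and suppose q is irreducible, meaning there is no 1-dimensional subspace L ⊂ ℝ² with α(L) = L for every α in the support of q. Then λ₊(q) = 0. -/
open MeasureTheory Filter Topology Matrix
open scoped ENNReal

noncomputable section

/-- The (topological) support of a measure: points all of whose open neighbourhoods
have positive measure. -/
def msupport (q : Measure SL2) : Set SL2 :=
  {α : SL2 | ∀ U : Set SL2, IsOpen U → α ∈ U → q U ≠ 0}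

/-- The horizontal axis `ℝ·(1,0)` in `ℝ²`. -/
def Hax : Submodule ℝ (Fin 2 → ℝ) := Submodule.span ℝ {![1, 0]}

/-- The vertical axis `ℝ·(0,1)` in `ℝ²`. -/
def Vax : Submodule ℝ (Fin 2 → ℝ) := Submodule.span ℝ {![0, 1]}

/-- The image of a subspace `L ⊆ ℝ²` under a matrix `α ∈ SL(2,ℝ)`. -/
noncomputable def mapLine (α : SL2) (L : Submodule ℝ (Fin 2 → ℝ)) : Submodule ℝ (Fin 2 → ℝ) :=
  Submodule.map (Matrix.toLin' (α : Matrix (Fin 2) (Fin 2) ℝ)) L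


/-- Product of signs. -/
def TT {X : Type*} (s : X → ℝ) : ∀ n : ℕ, (Fin n → X) → ℝ
  | 0, _ => 1
  | n + 1, ω => s (ω (Fin.last n)) * TT s n (fun j => ω j.castSucc)

/-- Signed Birkhoff sum. -/
def FF {X : Type*} (s f : X → ℝ) : ∀ n : ℕ, (Fin n → X) → ℝ
  | 0, _ => 0
  | n + 1, ω => FF s f n (fun j => ω j.castSucc) +
      TT s n (fun j => ω j.castSucc) * f (ω (Fin.last n))

section generic

set_option linter.unusedSectionVars false

variable {X : Type*} [MeasurableSpace X]

theorem TT_meas {s : X → ℝ} (hs : Measurable s) : ∀ n, Measurable (TT s n)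
  | 0 => measurable_const
  | n + 1 => by
    have h := TT_meas hs n
    exact (hs.comp (measurable_pi_apply _)).mul
      (h.comp (measurable_pi_lambda _ fun j => measurable_pi_apply _))

theorem FF_meas {s f : X → ℝ} (hs : Measurable s) (hf : Measurable f) :
    ∀ n, Measurable (FF s f n)
  | 0 => measurable_const
  | n + 1 => by
    have h := FF_meas hs hf n
    have h2 := TT_meas hs n
    have hp : Measurable (fun (ω : Fin (n+1) → X) => fun j : Fin n => ω j.castSucc) :=
      measurable_pi_lambda _ fun j => measurable_pi_apply _
    exact (h.comp hp).add ((h2.comp hp).mul (hf.comp (measurable_pi_apply _)))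

theorem TT_le {s : X → ℝ} (hs : ∀ x, |s x| ≤ 1) : ∀ n ω, |TT s n ω| ≤ 1
  | 0, _ => by simp [TT]
  | n + 1, ω => by
    simp only [TT, abs_mul]
    exact mul_le_one₀ (hs _) (abs_nonneg _) (TT_le hs n _)

theorem FF_le {s f : X → ℝ} {K : ℝ} (hs : ∀ x, |s x| ≤ 1) (hf : ∀ x, |f x| ≤ K) :
    ∀ n ω, |FF s f n ω| ≤ n * K
  | 0, _ => by simp [FF]
  | n + 1, ω => by
    simp only [FF]
    refine (abs_add_le _ _).trans ?_
    have h1 := FF_le hs hf n (fun j => ω j.castSucc)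
    have h2 := TT_le hs n (fun j => ω j.castSucc)
    have h3 := hf (ω (Fin.last n))
    rw [abs_mul]
    have := mul_le_mul h2 h3 (abs_nonneg _) zero_le_one
    push_cast
    linarith

theorem FF_add {s f g : X → ℝ} : ∀ n ω, FF s (fun x => f x + g x) n ω = FF s f n ω + FF s g n ω
  | 0, _ => by simp [FF]
  | n + 1, ω => by
    simp only [FF, FF_add n]; ring

theorem FF_cob {s : X → ℝ} (c : ℝ) : ∀ n ω, FF s (fun x => c * (s x - 1)) n ω = c * (TT s n ω - 1)
  | 0, _ => by simp [FF, TT]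
  | n + 1, ω => by
    simp only [FF, TT, FF_cob c n]; ring

variable (q : Measure X) [IsProbabilityMeasure q]

theorem mp (n : ℕ) : MeasurePreserving
    (fun ω : Fin (n+1) → X => ((ω (Fin.last n), fun j : Fin n => ω j.castSucc) : X × (Fin n → X)))
    (Measure.pi fun _ => q) (q.prod (Measure.pi fun _ => q)) := by
  have := measurePreserving_piFinSuccAbove (fun _ : Fin (n+1) => q) (Fin.last n)
  convert this using 1
  ext ω j
  · simp
  · simp [MeasurableEquiv.piFinSuccAbove, Fin.init]

theorem FF_abs {s f : X → ℝ} (hs : ∀ x, |s x| ≤ 1)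
    (hsm : Measurable s) (hfm : Measurable f) (hfi : Integrable f q) : ∀ n : ℕ,
    Integrable (FF s f n) (Measure.pi fun _ => q) ∧
    ∫ ω, |FF s f n ω| ∂(Measure.pi fun _ => q) ≤ n * ∫ x, |f x| ∂q
  | 0 => by simp [FF]
  | n + 1 => by
    obtain ⟨h1, h2⟩ := FF_abs hs hsm hfm hfi n
    have hF : Integrable (fun z : X × (Fin n → X) => FF s f n z.2)
        (q.prod (Measure.pi fun _ => q)) := h1.comp_snd q
    have hf : Integrable (fun z : X × (Fin n → X) => f z.1)
        (q.prod (Measure.pi fun _ => q)) := hfi.comp_fst _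
    have hT : Integrable (fun z : X × (Fin n → X) => TT s n z.2 * f z.1)
        (q.prod (Measure.pi fun _ => q)) := by
      refine hf.bdd_mul (c := 1) ((TT_meas hsm n).comp measurable_snd).aestronglyMeasurable ?_
      exact Eventually.of_forall fun z => TT_le hs n _
    have hI := hF.add hT
    refine ⟨(mp q n).integrable_comp_of_integrable hI, ?_⟩
    have e : ∫ ω, |FF s f (n+1) ω| ∂(Measure.pi fun _ => q) =
        ∫ z, |FF s f n z.2 + TT s n z.2 * f z.1| ∂(q.prod (Measure.pi fun _ => q)) := by
      rw [← (mp q n).map_eq, integral_map (mp q n).measurable.aemeasurable]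
      · rfl
      · rw [(mp q n).map_eq]; exact hI.abs.aestronglyMeasurable
    rw [e]
    calc _ ≤ ∫ z, (|FF s f n z.2| + |f z.1|) ∂(q.prod (Measure.pi fun _ : Fin n => q)) := by
          refine integral_mono hI.abs (hF.abs.add hf.abs) fun z => ?_
          refine (abs_add_le _ _).trans ?_
          rw [abs_mul]
          have := mul_le_mul_of_nonneg_right (TT_le hs n z.2) (abs_nonneg (f z.1))
          simp only
          linarith
      _ = _ := by
          rw [integral_add hF.abs hf.abs,
            integral_fun_snd (μ := q) (fun ω => |FF s f n ω|),
            integral_fun_fst (ν := Measure.pi fun _ : Fin n => q) (fun x => |f x|)]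
      _ ≤ _ := by
          simp; linarith

theorem FF_sq {s f : X → ℝ} {K : ℝ} (hs : ∀ x, |s x| ≤ 1) (hf : ∀ x, |f x| ≤ K)
    (hsm : Measurable s) (hfm : Measurable f) (h0 : ∫ x, f x ∂q = 0) : ∀ n : ℕ,
    ∫ ω, (FF s f n ω)^2 ∂(Measure.pi fun _ => q) ≤ n * K^2
  | 0 => by simp [FF]
  | n + 1 => by
    have h2 := FF_sq hs hf hsm hfm h0 n
    have hFm := FF_meas hsm hfm n
    have hTm := TT_meas hsm n
    have i1 : Integrable (fun z : X × (Fin n → X) => (FF s f n z.2)^2)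
        (q.prod (Measure.pi fun _ => q)) := by
      refine Integrable.of_bound (C := (n*K)^2)
        ((hFm.comp measurable_snd).pow_const 2).aestronglyMeasurable
        (Eventually.of_forall fun z => ?_)
      rw [Real.norm_eq_abs, abs_pow]
      exact pow_le_pow_left₀ (abs_nonneg _) (FF_le hs hf n _) 2
    have i2 : Integrable (fun z : X × (Fin n → X) => f z.1 * (2 * FF s f n z.2 * TT s n z.2))
        (q.prod (Measure.pi fun _ => q)) := by
      refine Integrable.of_bound (C := K * (2 * (n*K) * 1)) (by fun_prop)
        (Eventually.of_forall fun z => ?_)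
      rw [Real.norm_eq_abs, abs_mul, abs_mul, abs_mul, abs_two]
      have := FF_le hs hf n z.2
      have := TT_le hs n z.2
      have := hf z.1
      gcongr
      · exact (abs_nonneg _).trans this
      · exact mul_nonneg zero_le_two ((abs_nonneg _).trans (FF_le hs hf n z.2))
    have e : ∫ ω, (FF s f (n+1) ω)^2 ∂(Measure.pi fun _ => q) =
        ∫ z, (FF s f n z.2 + TT s n z.2 * f z.1)^2 ∂(q.prod (Measure.pi fun _ => q)) := by
      rw [← (mp q n).map_eq, integral_map (mp q n).measurable.aemeasurable]
      · rfl
      · exact Measurable.aestronglyMeasurable (by fun_prop)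
    rw [e]
    calc _ ≤ ∫ z, ((FF s f n z.2)^2 + f z.1 * (2 * FF s f n z.2 * TT s n z.2) + K^2)
            ∂(q.prod (Measure.pi fun _ : Fin n => q)) := by
          refine integral_mono_of_nonneg (Eventually.of_forall fun z => sq_nonneg _)
            ((i1.add i2).add (integrable_const _)) (Eventually.of_forall fun z => ?_)
          have a1 : |TT s n z.2 * f z.1| ≤ K := by
            rw [abs_mul]
            have := mul_le_mul (TT_le hs n z.2) (hf z.1) (abs_nonneg _) zero_le_one
            linarith
          have a2 := sq_le_sq' (by linarith [neg_abs_le (TT s n z.2 * f z.1)])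
            ((le_abs_self _).trans a1)
          simp only
          nlinarith
      _ = (∫ ω, (FF s f n ω)^2 ∂(Measure.pi fun _ => q)) + K^2 := by
          have i3 : Integrable (fun z : X × (Fin n → X) => (FF s f n z.2)^2 +
              f z.1 * (2 * FF s f n z.2 * TT s n z.2)) (q.prod (Measure.pi fun _ => q)) :=
            i1.add i2
          rw [integral_add i3 (integrable_const _), integral_add i1 i2,
            integral_fun_snd (μ := q) (fun ω => (FF s f n ω)^2),
            integral_prod_mul (fun x => f x) (fun ω => 2 * FF s f n ω * TT s n ω), h0]
          simp
      _ ≤ _ := by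
          push_cast; linarith

theorem FF_tendsto {s a : X → ℝ} (hs : ∀ x, |s x| ≤ 1)
    (hsm : Measurable s) (ham : Measurable a) (hai : Integrable a q)
    (hr : ∫ x, (s x - 1) ∂q ≠ 0) :
    Tendsto (fun n : ℕ => (n:ℝ)⁻¹ * ∫ ω, |FF s a n ω| ∂(Measure.pi fun _ => q)) atTop (𝓝 0) := by
  have hsi : Integrable (fun x => s x - 1) q :=
    (Integrable.of_bound (C := 1) hsm.aestronglyMeasurable (Eventually.of_forall hs)).sub
      (integrable_const _)
  have key : ∀ ε > 0, ∃ C : ℝ, ∀ n : ℕ, 0 < n →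
      ∫ ω, |FF s a n ω| ∂(Measure.pi fun _ => q) ≤ 2 * ε * n + C := by
    intro ε hε
    obtain ⟨b, hb, hbm⟩ := (memLp_one_iff_integrable.2 hai).exists_simpleFunc_eLpNorm_sub_lt
      ENNReal.one_ne_top (ε := ENNReal.ofReal ε) (by simpa using hε)
    obtain ⟨K, hK⟩ := b.exists_forall_norm_le
    have hbi := memLp_one_iff_integrable.1 hbm
    have hgi : Integrable (fun x => a x - b x) q := hai.sub hbi
    have hg : ∫ x, |a x - b x| ∂q ≤ ε := by
      have h1 : eLpNorm (fun x => a x - b x) 1 q ≤ ENNReal.ofReal ε := hb.le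
      rw [eLpNorm_one_eq_lintegral_enorm] at h1
      have h2 := integral_norm_eq_lintegral_enorm hgi.aestronglyMeasurable
      simp only [Real.norm_eq_abs] at h2
      rw [h2]
      exact ENNReal.toReal_le_of_le_ofReal hε.le h1
    set c : ℝ := -(∫ x, b x ∂q) / ∫ x, (s x - 1) ∂q with hc
    set d : X → ℝ := fun x => b x + c * (s x - 1) with hd
    have hdm : Measurable d := by
      have := b.measurable
      fun_prop
    have hd0 : ∫ x, d x ∂q = 0 := by
      rw [hd, integral_add hbi (hsi.const_mul c), integral_const_mul, hc]
      field_simp; ring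
    have hdb : ∀ x, |d x| ≤ K + |c| * 2 := fun x => by
      refine (abs_add_le _ _).trans (add_le_add (hK x) ?_)
      rw [abs_mul]
      gcongr
      have := abs_le.1 (hs x)
      rw [abs_le]; constructor <;> linarith
    set K' := K + |c| * 2
    refine ⟨K'^2 / (4*ε) + 2 * |c|, fun n hn => ?_⟩
    have hdec : ∀ ω, |FF s a n ω| ≤ |FF s (fun x => a x - b x) n ω| +
        ((FF s d n ω)^2 / (4*ε*n) + (ε * n + 2*|c|)) := by
      intro ω
      have e1 : FF s a n ω = FF s (fun x => a x - b x) n ω + FF s b n ω := by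
        rw [← FF_add]; simp
      have e2 : FF s d n ω = FF s b n ω + c * (TT s n ω - 1) := by
        rw [← FF_cob, ← FF_add]
      have e3 : FF s a n ω = FF s (fun x => a x - b x) n ω + FF s d n ω - c * (TT s n ω - 1) := by
        rw [e1, e2]; ring
      have e4 : |c * (TT s n ω - 1)| ≤ 2 * |c| := by
        rw [abs_mul, mul_comm]
        gcongr
        have := abs_le.1 (TT_le hs n ω)
        rw [abs_le]; constructor <;> linarith
      have hn' : (0:ℝ) < n := by exact_mod_cast hn
      have e5 : |FF s d n ω| ≤ (FF s d n ω)^2 / (4*ε*n) + ε * n := by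
        have hp : 0 < ε * n := by positivity
        have : (FF s d n ω)^2 / (4*ε*n) + ε * n - |FF s d n ω|
            = (|FF s d n ω| - 2*(ε*n))^2/(4*(ε*n)) := by
          rw [← sq_abs]; field_simp; ring
        have h0 : 0 ≤ (|FF s d n ω| - 2*(ε*n))^2/(4*(ε*n)) := by positivity
        linarith
      rw [e3]
      have := abs_sub (FF s (fun x => a x - b x) n ω + FF s d n ω) (c * (TT s n ω - 1))
      have := abs_add_le (FF s (fun x => a x - b x) n ω) (FF s d n ω)
      linarith
    have hn' : (0:ℝ) < n := by exact_mod_cast hn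
    obtain ⟨j1, j2⟩ := FF_abs q (f := fun x => a x - b x) hs hsm (ham.sub b.measurable) hgi n
    have j3 := FF_sq q hs hdb hsm hdm hd0 n
    have j4 : Integrable (fun ω => (FF s d n ω)^2) (Measure.pi fun _ => q) := by
      refine Integrable.of_bound (C := (n*K')^2)
        ((FF_meas hsm hdm n).pow_const 2).aestronglyMeasurable
        (Eventually.of_forall fun z => ?_)
      rw [Real.norm_eq_abs, abs_pow]
      exact pow_le_pow_left₀ (abs_nonneg _) (FF_le hs hdb n _) 2
    have j5 : Integrable (fun ω => (FF s d n ω)^2 / (4*ε*n) + (ε * n + 2*|c|))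
      (Measure.pi fun _ => q) := (j4.div_const _).add (integrable_const _)
    calc _ ≤ ∫ ω, (|FF s (fun x => a x - b x) n ω| +
        ((FF s d n ω)^2 / (4*ε*n) + (ε * n + 2*|c|))) ∂(Measure.pi fun _ => q) :=
          integral_mono_of_nonneg (Eventually.of_forall fun z => abs_nonneg _)
            (j1.abs.add j5) (Eventually.of_forall hdec)
      _ = (∫ ω, |FF s (fun x => a x - b x) n ω| ∂(Measure.pi fun _ => q)) +
          ((∫ ω, (FF s d n ω)^2 ∂(Measure.pi fun _ => q)) / (4*ε*n) + (ε * n + 2*|c|)) := by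
          rw [integral_add j1.abs j5, integral_add (j4.div_const _) (integrable_const _),
            integral_div]
          simp
      _ ≤ n * ε + ((n * K'^2) / (4*ε*n) + (ε * n + 2*|c|)) := by
          gcongr
          exact j2.trans (by gcongr)
      _ = _ := by field_simp; ring
  rw [Metric.tendsto_atTop]
  intro ε hε
  obtain ⟨C, hC⟩ := key (ε/4) (by positivity)
  obtain ⟨N, hN⟩ := exists_nat_gt (2 * |C| / ε)
  refine ⟨N + 1, fun n hn => ?_⟩
  have hn0 : 0 < n := by omega
  have hn' : (0:ℝ) < n := by exact_mod_cast hn0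
  have h1 := hC n hn0
  have h2 : (N:ℝ) + 1 ≤ n := by exact_mod_cast hn
  have h3 : 0 ≤ ∫ ω, |FF s a n ω| ∂(Measure.pi fun _ => q) :=
    integral_nonneg fun _ => abs_nonneg _
  rw [Real.dist_eq, sub_zero, abs_of_nonneg (by positivity), inv_mul_lt_iff₀ hn']
  rw [div_lt_iff₀ hε] at hN
  have := le_abs_self C
  nlinarith

end generic

/-- Generalized permutation matrices, with logarithmic size `S` and sign `T`. -/
def PP (M : Matrix (Fin 2) (Fin 2) ℝ) (S T : ℝ) : Prop :=
  (T = 1 ∧ M 0 1 = 0 ∧ M 1 0 = 0 ∧ |M 0 0| = Real.exp S ∧ |M 1 1| = Real.exp (-S)) ∨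
  (T = -1 ∧ M 0 0 = 0 ∧ M 1 1 = 0 ∧ |M 1 0| = Real.exp S ∧ |M 0 1| = Real.exp (-S))

theorem PP_mul {A M : Matrix (Fin 2) (Fin 2) ℝ} {a s S T : ℝ} (hA : PP A a s) (hM : PP M S T) :
    PP (A * M) (S + T * a) (s * T) := by
  rcases hA with ⟨rfl, h1, h2, h3, h4⟩ | ⟨rfl, h1, h2, h3, h4⟩ <;>
  rcases hM with ⟨rfl, g1, g2, g3, g4⟩ | ⟨rfl, g1, g2, g3, g4⟩
  · left
    simp [Matrix.mul_apply, Fin.sum_univ_two, h1, h2, h3, h4, g1, g2, g3, g4, abs_mul,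
      ← Real.exp_add, add_comm]
  · right
    simp [Matrix.mul_apply, Fin.sum_univ_two, h1, h2, h3, h4, g1, g2, g3, g4, abs_mul,
      ← Real.exp_add, add_comm]
  · right
    simp [Matrix.mul_apply, Fin.sum_univ_two, h1, h2, h3, h4, g1, g2, g3, g4, abs_mul,
      ← Real.exp_add, add_comm]
  · left
    simp [Matrix.mul_apply, Fin.sum_univ_two, h1, h2, h3, h4, g1, g2, g3, g4, abs_mul,
      ← Real.exp_add, add_comm]

theorem entry_le (M : Matrix (Fin 2) (Fin 2) ℝ) (i j : Fin 2) : |M i j| ≤ opNorm M := by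
  have h := (LinearMap.toContinuousLinearMap (Matrix.toEuclideanLin M)).le_opNorm
    (EuclideanSpace.single j 1)
  have h2 := PiLp.norm_apply_le ((LinearMap.toContinuousLinearMap (Matrix.toEuclideanLin M))
    (EuclideanSpace.single j 1)) i
  have h3 := h2.trans h
  simpa [opNorm, Matrix.toLpLin_apply, Matrix.mulVec_single] using h3

theorem PP_norm {M : Matrix (Fin 2) (Fin 2) ℝ} {S T : ℝ} (hM : PP M S T) :
    Real.log (opNorm M) = |S| := by
  have hb : ∀ {x y : ℝ}, |x| = Real.exp y → y ≤ |S| → ∀ z : ℝ,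
      (x * z)^2 ≤ (Real.exp |S|)^2 * z^2 := by
    intro x y h1 h2 z
    rw [mul_pow, ← sq_abs x, h1]
    gcongr
  have hS := le_abs_self S
  have hS' := neg_le_abs S
  have hup : opNorm M ≤ Real.exp |S| := by
    refine ContinuousLinearMap.opNorm_le_bound _ (Real.exp_nonneg _) fun x => ?_
    refine abs_le_of_sq_le_sq' ?_ (by positivity) |>.2
    rw [mul_pow, EuclideanSpace.norm_sq_eq, EuclideanSpace.norm_sq_eq]
    simp only [LinearMap.coe_toContinuousLinearMap', Matrix.toLpLin_apply, Fin.sum_univ_two,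
      Real.norm_eq_abs, sq_abs, Matrix.mulVec, dotProduct]
    rcases hM with ⟨-, g1, g2, g3, g4⟩ | ⟨-, g1, g2, g3, g4⟩
    · simp only [g1, g2, zero_mul, add_zero, zero_add]
      have := hb g3 hS (x 0)
      have := hb g4 hS' (x 1)
      linarith
    · simp only [g1, g2, zero_mul, add_zero, zero_add]
      have := hb g3 hS (x 0)
      have := hb g4 hS' (x 1)
      linarith
  have hlo : Real.exp |S| ≤ opNorm M := by
    rcases hM with ⟨-, g1, g2, g3, g4⟩ | ⟨-, g1, g2, g3, g4⟩ <;>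
    rcases abs_choice S with h | h <;> rw [h]
    · exact g3 ▸ entry_le M _ _
    · exact g4 ▸ entry_le M _ _
    · exact g3 ▸ entry_le M _ _
    · exact g4 ▸ entry_le M _ _
  rw [le_antisymm hup hlo, Real.log_exp]

/-- Sign of a matrix. -/
def sgn (α : SL2) : ℝ := if (α : Matrix (Fin 2) (Fin 2) ℝ) 1 0 = 0 then 1 else -1

/-- Logarithmic size of a matrix. -/
def lsz (α : SL2) : ℝ := Real.log (|(α : Matrix (Fin 2) (Fin 2) ℝ) 0 0| +
  |(α : Matrix (Fin 2) (Fin 2) ℝ) 1 0|)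

theorem borel_SL2 : BorelSpace SL2 := ⟨rfl⟩

theorem sct_SL2 : SecondCountableTopology SL2 :=
  haveI : SecondCountableTopology (Matrix (Fin 2) (Fin 2) ℝ) :=
    inferInstanceAs (SecondCountableTopology (Fin 2 → Fin 2 → ℝ))
  TopologicalSpace.secondCountableTopology_induced _ _ _

theorem cont_entry (i j : Fin 2) : Continuous fun α : SL2 => (α : Matrix (Fin 2) (Fin 2) ℝ) i j := by
  have h : Continuous fun α : SL2 => (α : Matrix (Fin 2) (Fin 2) ℝ) := continuous_induced_dom
  exact (continuous_apply j).comp ((continuous_apply i).comp h)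

theorem meas_entry (i j : Fin 2) : Measurable fun α : SL2 => (α : Matrix (Fin 2) (Fin 2) ℝ) i j :=
  haveI := borel_SL2
  (cont_entry i j).measurable

theorem sgn_meas : Measurable sgn :=
  Measurable.ite (meas_entry 1 0 (measurableSet_singleton 0)) measurable_const measurable_const

theorem lsz_meas : Measurable lsz := by
  have := meas_entry 0 0
  have := meas_entry 1 0
  exact Real.measurable_log.comp ((meas_entry 0 0).abs.add (meas_entry 1 0).abs)

theorem mulVec_mem {α : SL2} {L L' : Submodule ℝ (Fin 2 → ℝ)} (h : mapLine α L = L')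
    {v : Fin 2 → ℝ} (hv : v ∈ L) : (α : Matrix (Fin 2) (Fin 2) ℝ) *ᵥ v ∈ L' := by
  rw [← h]
  exact ⟨v, hv, by simp⟩

theorem mem_Hax {v : Fin 2 → ℝ} (h : v ∈ Hax) : v 1 = 0 := by
  obtain ⟨c, rfl⟩ := Submodule.mem_span_singleton.1 h
  simp

theorem mem_Vax {v : Fin 2 → ℝ} (h : v ∈ Vax) : v 0 = 0 := by
  obtain ⟨c, rfl⟩ := Submodule.mem_span_singleton.1 h
  simp

theorem e_Hax : ![1, 0] ∈ Hax := Submodule.mem_span_singleton_self _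

theorem e_Vax : ![0, 1] ∈ Vax := Submodule.mem_span_singleton_self _

theorem PP_of_axes {α : SL2} (h : (mapLine α Hax = Hax ∧ mapLine α Vax = Vax) ∨
      (mapLine α Hax = Vax ∧ mapLine α Vax = Hax)) :
    PP (α : Matrix (Fin 2) (Fin 2) ℝ) (lsz α) (sgn α) := by
  have hdet := α.det_coe
  rw [Matrix.det_fin_two] at hdet
  have key : ∀ x y : ℝ, |x| * |y| = 1 → |x| = Real.exp (Real.log |x|) ∧
      |y| = Real.exp (-Real.log |x|) := by
    intro x y hxy
    have hx : 0 < |x| := by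
      rw [abs_pos]; rintro rfl; simp at hxy
    rw [Real.exp_neg, Real.exp_log hx]
    exact ⟨rfl, eq_inv_of_mul_eq_one_right hxy⟩
  rcases h with ⟨h1, h2⟩ | ⟨h1, h2⟩
  · have a1 := mem_Hax (mulVec_mem h1 e_Hax)
    have a2 := mem_Vax (mulVec_mem h2 e_Vax)
    simp [Matrix.mulVec, dotProduct, Fin.sum_univ_two] at a1 a2
    left
    have hd : |α.1 0 0| * |α.1 1 1| = 1 := by
      rw [← abs_mul]; rw [a1, mul_zero, sub_zero] at hdet; rw [hdet, abs_one]
    have := key _ _ hd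
    refine ⟨by simp [sgn, a1], a2, a1, ?_⟩
    simpa [lsz, a1] using this
  · have a1 := mem_Vax (mulVec_mem h1 e_Hax)
    have a2 := mem_Hax (mulVec_mem h2 e_Vax)
    simp [Matrix.mulVec, dotProduct, Fin.sum_univ_two] at a1 a2
    right
    have hd : |α.1 1 0| * |α.1 0 1| = 1 := by
      rw [← abs_mul, mul_comm]; rw [a1, zero_mul, zero_sub] at hdet
      rw [← abs_neg, hdet, abs_one]
    have hne : α.1 1 0 ≠ 0 := by
      intro h0; simp [h0] at hd
    have := key _ _ hd
    refine ⟨by simp [sgn, hne], a1, a2, ?_⟩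
    simpa [lsz, a1] using this

theorem ae_msupport (q : Measure SL2) : ∀ᵐ α ∂q, α ∈ msupport q := by
  haveI := sct_SL2
  refine measure_null_of_locally_null _ fun α hα => ?_
  have hα : ¬ α ∈ msupport q := hα
  simp only [msupport, Set.mem_ofPred_eq, not_forall, not_not] at hα
  obtain ⟨U, hU, hm, h0⟩ := hα
  exact ⟨U, mem_nhdsWithin_of_mem_nhds (hU.mem_nhds hm), h0⟩

theorem PP_prod : ∀ (n : ℕ) (ω : Fin n → SL2),
    (∀ i, PP (ω i : Matrix (Fin 2) (Fin 2) ℝ) (lsz (ω i)) (sgn (ω i))) →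
    PP (((List.ofFn fun i => id (ω i)).reverse.prod : SL2) : Matrix (Fin 2) (Fin 2) ℝ)
      (FF sgn lsz n ω) (TT sgn n ω)
  | 0, ω, _ => by
    left; simp [FF, TT]
  | n + 1, ω, h => by
    have ih := PP_prod n (fun j => ω j.castSucc) (fun i => h _)
    have := PP_mul (h (Fin.last n)) ih
    rw [List.ofFn_succ', List.concat_eq_append, List.reverse_append, List.reverse_singleton,
      List.singleton_append, List.prod_cons, Matrix.SpecialLinearGroup.coe_mul]
    exact this

/-- **Vanishing of `λ₊` for irreducible measures preserving the pair of axes.**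
If every matrix in the support of `q` either preserves both coordinate axes or swaps
them, and `q` is irreducible (no line is invariant under every matrix of the support),
then `λ₊(q) = 0`. -/
theorem lyapPlus_eq_zero_of_axes_invariant_irreducible
    (q : Measure SL2) [IsProbabilityMeasure q]
    (hlog : ∫⁻ α, ENNReal.ofReal (Real.log (opNorm (α : Matrix (Fin 2) (Fin 2) ℝ))) ∂q < ⊤)
    (haxes : ∀ α ∈ msupport q,
      (mapLine α Hax = Hax ∧ mapLine α Vax = Vax) ∨
      (mapLine α Hax = Vax ∧ mapLine α Vax = Hax))
    (hirr : ¬ ∃ L : Submodule ℝ (Fin 2 → ℝ), Module.finrank ℝ L = 1 ∧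
      ∀ α ∈ msupport q, mapLine α L = L) :
    lyapPlus q = 0 := by
  have hPP : ∀ᵐ α : SL2 ∂q, PP (α : Matrix (Fin 2) (Fin 2) ℝ) (lsz α) (sgn α) := by
    filter_upwards [ae_msupport q] with α hα using PP_of_axes (haxes α hα)
  have hs : ∀ α, |sgn α| ≤ 1 := fun α => by
    unfold sgn; split_ifs <;> simp
  have hai : Integrable lsz q := by
    refine ⟨lsz_meas.aestronglyMeasurable, ?_⟩
    unfold HasFiniteIntegral
    refine lt_of_eq_of_lt (lintegral_congr_ae ?_) hlog
    filter_upwards [hPP] with α hα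
    rw [PP_norm hα, Real.enorm_eq_ofReal_abs]
  have hanti : ∃ α ∈ msupport q, (α : Matrix (Fin 2) (Fin 2) ℝ) 1 0 ≠ 0 := by
    by_contra hcon
    push Not at hcon
    refine hirr ⟨Hax, finrank_span_singleton (by simp), fun α hα => ?_⟩
    rcases haxes α hα with h | h
    · exact h.1
    · exfalso
      have h0 := hcon α hα
      have a1 := mem_Vax (mulVec_mem h.1 e_Hax)
      simp [Matrix.mulVec, dotProduct, Fin.sum_univ_two] at a1
      have hdet := α.det_coe
      rw [Matrix.det_fin_two, a1, h0] at hdet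
      simp at hdet
  have hr : ∫ x, (sgn x - 1) ∂q ≠ 0 := by
    obtain ⟨α, hα, hne⟩ := hanti
    have hpos := hα {β : SL2 | (β : Matrix (Fin 2) (Fin 2) ℝ) 1 0 ≠ 0}
      (isOpen_ne.preimage (cont_entry 1 0)) hne
    intro h0
    have hi : Integrable (fun x => 1 - sgn x) q :=
      (integrable_const _).sub
        (Integrable.of_bound (C := 1) sgn_meas.aestronglyMeasurable (Eventually.of_forall hs))
    have h1 : ∫ x, (1 - sgn x) ∂q = 0 := by
      rw [← neg_eq_zero, ← integral_neg, ← h0]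
      simp
    rw [integral_eq_zero_iff_of_nonneg (fun x => by
      have := (abs_le.1 (hs x)).2
      simp only [Pi.zero_apply]; linarith) hi] at h1
    apply hpos
    refine measure_mono_null ?_ h1
    intro β hβ
    have hβ : (β : Matrix (Fin 2) (Fin 2) ℝ) 1 0 ≠ 0 := hβ
    simp only [Set.mem_compl_iff, Set.mem_ofPred_eq, sgn, if_neg hβ, Pi.zero_apply]
    norm_num
  have ht := FF_tendsto q hs sgn_meas lsz_meas hai hr
  have heq : lyapSeq id (fun α : SL2 => opNorm (α : Matrix (Fin 2) (Fin 2) ℝ)) q =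
      fun n : ℕ => (n:ℝ)⁻¹ * ∫ ω, |FF sgn lsz n ω| ∂(Measure.pi fun _ => q) := by
    funext n
    unfold lyapSeq
    congr 1
    refine integral_congr_ae ?_
    have hall : ∀ᵐ ω : Fin n → SL2 ∂(Measure.pi fun _ => q), ∀ i,
        PP (ω i : Matrix (Fin 2) (Fin 2) ℝ) (lsz (ω i)) (sgn (ω i)) :=
      ae_all_iff.2 fun i =>
        (measurePreserving_eval (fun _ : Fin n => q) i).quasiMeasurePreserving.ae hPP
    filter_upwards [hall] with ω hω
    exact PP_norm (PP_prod n ω hω)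
  unfold lyapPlus lyapCocycle
  rw [heq]
  exact ht.limUnder_eq
end
end

section
/- Let 0 < r < 1/2 < s < 1, l = s/r, and σ_k = e^{l^k} for k ≥ 1. Define matrices α(2k−1) = diag(σ_k, σ_k⁻¹) and α(2k) = diag(σ_k⁻¹, σ_k), and weights p₁ = p₂ = (1 − 2r²/(1−r))/2 and p_{2k−1} = p_{2k} = r^k for k ≥ 2, and let q = Σ_{k} p_k δ_{α(k)}. Then ∫ log‖α‖ dq(α) < ∞, but ∫ ‖α − id‖ dq(α) = Σ_{k≥1} 2 p_{2k} (e^{l^k} − 1) = +∞; in particular q does not belong to P₁(SL(2,ℝ)). -/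
open MeasureTheory Filter Topology Matrix
open scoped ENNReal

noncomputable section

theorem opNorm_diag_aux (x y : ℝ) : opNorm (Matrix.diagonal ![x, y]) = max |x| |y| := by
  have h := Matrix.l2_opNorm_diagonal (𝕜 := ℝ) ![x, y]
  rw [Matrix.l2_opNorm_def] at h
  unfold opNorm
  refine Eq.trans ?_ (h.trans ?_)
  · rfl
  · apply le_antisymm
    · rw [pi_norm_le_iff_of_nonneg (by positivity)]
      intro i
      fin_cases i <;> simp
    · apply max_le
      · exact norm_le_pi_norm ![x, y] 0
      · exact norm_le_pi_norm ![x, y] 1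

theorem opNorm_cont_aux : Continuous opNorm := by
  unfold opNorm
  refine continuous_norm.comp ?_
  exact LinearMap.continuous_of_finiteDimensional
    ((LinearMap.toContinuousLinearMap (𝕜 := ℝ) (E := EuclideanSpace ℝ (Fin 2))
      (F' := EuclideanSpace ℝ (Fin 2))).toLinearMap ∘ₗ
      (Matrix.toEuclideanLin (𝕜 := ℝ) (m := Fin 2) (n := Fin 2)).toLinearMap)

theorem coe_meas_aux (g : Matrix (Fin 2) (Fin 2) ℝ → ℝ) (hg : Continuous g) :
    Measurable (fun α : SL2 => g (α : Matrix (Fin 2) (Fin 2) ℝ)) := by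
  have : OpensMeasurableSpace SL2 := ⟨le_rfl⟩
  have h : Continuous (fun α : SL2 => (α : Matrix (Fin 2) (Fin 2) ℝ)) := continuous_induced_dom
  exact (hg.comp h).measurable

/-- **A measure with integrable `log‖α‖` but infinite first moment.**
Let `0 < r < 1/2 < s < 1`, `l = s/r`, `σ_k = e^{l^k}`. Let `a k = diag(σ_k, σ_k⁻¹)` and
`b k = diag(σ_k⁻¹, σ_k)` (these are the matrices `α(2k−1)` and `α(2k)`), carrying the
weights `p_{2k−1} = p_{2k} = w k`, with `w 1 = (1 − 2r²/(1−r))/2` and `w k = r^k` for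
`k ≥ 2`, and let `q = Σ_k p_k δ_{α(k)}`. Then `∫ log‖α‖ dq < ∞`, while
`∫ ‖α − id‖ dq = Σ_{k≥1} 2 p_{2k} (e^{l^k} − 1) = ∞`; in particular
`q ∉ P₁(SL(2,ℝ))`. -/
theorem log_integrable_but_infinite_first_moment
    (r s l : ℝ) (hr0 : 0 < r) (hr : r < 1 / 2) (hs : 1 / 2 < s) (hs1 : s < 1)
    (hl : l = s / r)
    (σ : ℕ → ℝ) (hσ : ∀ k, σ k = Real.exp (l ^ k))
    (a b : ℕ → SL2)
    (ha : ∀ k, 1 ≤ k → (a k : Matrix (Fin 2) (Fin 2) ℝ) = Matrix.diagonal ![σ k, (σ k)⁻¹])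
    (hb : ∀ k, 1 ≤ k → (b k : Matrix (Fin 2) (Fin 2) ℝ) = Matrix.diagonal ![(σ k)⁻¹, σ k])
    (w : ℕ → ℝ≥0∞)
    (hw1 : w 1 = ENNReal.ofReal ((1 - 2 * r ^ 2 / (1 - r)) / 2))
    (hw : ∀ k, 2 ≤ k → w k = ENNReal.ofReal (r ^ k))
    (q : Measure SL2)
    (hq : q = Measure.sum fun k : ℕ =>
      if 1 ≤ k then w k • (Measure.dirac (a k) + Measure.dirac (b k)) else 0) :
    (∫⁻ α, ENNReal.ofReal (Real.log (opNorm (α : Matrix (Fin 2) (Fin 2) ℝ))) ∂q < ⊤) ∧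
    (∫⁻ α, ENNReal.ofReal (opNorm ((α : Matrix (Fin 2) (Fin 2) ℝ) - 1)) ∂q =
      ∑' k : ℕ, if 1 ≤ k then 2 * w k * ENNReal.ofReal (Real.exp (l ^ k) - 1) else 0) ∧
    (∫⁻ α, ENNReal.ofReal (opNorm ((α : Matrix (Fin 2) (Fin 2) ℝ) - 1)) ∂q = ⊤) := by
  have hl1 : 1 < l := by rw [hl, lt_div_iff₀ hr0]; linarith
  have hl0 : 0 < l := by linarith
  have hrl : r * l = s := by rw [hl]; field_simp
  have hpow : ∀ k : ℕ, 1 ≤ l ^ k := fun k => one_le_pow₀ hl1.le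
  have hσ1 : ∀ k, 1 ≤ σ k := fun k => by
    rw [hσ]; exact Real.one_le_exp (by linarith [hpow k])
  have hσi : ∀ k, (σ k)⁻¹ ≤ 1 := fun k => inv_le_one_of_one_le₀ (hσ1 k)
  have hσp : ∀ k, 0 < (σ k)⁻¹ := fun k => inv_pos.2 (by linarith [hσ1 k])
  -- norms
  have na : ∀ k, 1 ≤ k → opNorm (a k : Matrix (Fin 2) (Fin 2) ℝ) = σ k := fun k hk => by
    rw [ha k hk, opNorm_diag_aux, abs_of_pos (hσp k), abs_of_pos (by linarith [hσ1 k])]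
    exact max_eq_left (by linarith [hσ1 k, hσi k])
  have nb : ∀ k, 1 ≤ k → opNorm (b k : Matrix (Fin 2) (Fin 2) ℝ) = σ k := fun k hk => by
    rw [hb k hk, opNorm_diag_aux, abs_of_pos (hσp k), abs_of_pos (by linarith [hσ1 k])]
    exact max_eq_right (by linarith [hσ1 k, hσi k])
  have hinv : ∀ k, 1 - (σ k)⁻¹ ≤ σ k - 1 := fun k => by
    have h0 : (0:ℝ) < σ k := by linarith [hσ1 k]
    have h1 : σ k * (σ k)⁻¹ = 1 := mul_inv_cancel₀ h0.ne'
    nlinarith [hσ1 k, hσi k, sq_nonneg (σ k - 1), hσp k]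
  have dsub : ∀ x y : ℝ, Matrix.diagonal ![x, y] - (1 : Matrix (Fin 2) (Fin 2) ℝ)
      = Matrix.diagonal ![x - 1, y - 1] := fun x y => by
    ext i j
    fin_cases i <;> fin_cases j <;> simp
  have ma : ∀ k, 1 ≤ k → opNorm ((a k : Matrix (Fin 2) (Fin 2) ℝ) - 1) = σ k - 1 := fun k hk => by
    rw [ha k hk, dsub, opNorm_diag_aux, abs_of_nonneg (by linarith [hσ1 k]),
      abs_of_nonpos (by linarith [hσi k])]
    exact max_eq_left (by linarith [hinv k])
  have mb : ∀ k, 1 ≤ k → opNorm ((b k : Matrix (Fin 2) (Fin 2) ℝ) - 1) = σ k - 1 := fun k hk => by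
    rw [hb k hk, dsub, opNorm_diag_aux, abs_of_nonpos (by linarith [hσi k]),
      abs_of_nonneg (by linarith [hσ1 k])]
    exact max_eq_right (by linarith [hinv k])
  -- integrals against q
  have hint : ∀ f : SL2 → ℝ≥0∞, Measurable f → ∫⁻ α, f α ∂q =
      ∑' k : ℕ, if 1 ≤ k then w k * (f (a k) + f (b k)) else 0 := fun f hf => by
    rw [hq, lintegral_sum_measure]
    congr 1
    ext k
    split_ifs with hk
    · rw [lintegral_smul_measure, lintegral_add_measure, lintegral_dirac' _ hf,
        lintegral_dirac' _ hf, smul_eq_mul]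
    · simp
  have e2 : ∫⁻ α, ENNReal.ofReal (opNorm ((α : Matrix (Fin 2) (Fin 2) ℝ) - 1)) ∂q =
      ∑' k : ℕ, if 1 ≤ k then 2 * w k * ENNReal.ofReal (Real.exp (l ^ k) - 1) else 0 := by
    rw [hint _ (coe_meas_aux (fun A => opNorm (A - 1))
      (opNorm_cont_aux.comp (continuous_id.sub continuous_const))).ennreal_ofReal]
    congr 1
    ext k
    split_ifs with hk
    · rw [ma k hk, mb k hk, hσ]; ring
    · rfl
  refine ⟨?_, e2, ?_⟩
  · rw [hint _ (coe_meas_aux opNorm opNorm_cont_aux).log.ennreal_ofReal]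
    have hwle : ∀ k, 1 ≤ k → w k ≤ ENNReal.ofReal ((1 + 1 / r) * r ^ k) := fun k hk => by
      rcases hk.eq_or_lt with rfl | hk2
      · rw [hw1]
        apply ENNReal.ofReal_le_ofReal
        have h1 : 0 ≤ 2 * r ^ 2 / (1 - r) := div_nonneg (by positivity) (by linarith)
        have h2 : (1 + 1 / r) * r ^ 1 = r + 1 := by field_simp
        rw [h2]; linarith
      · rw [hw k hk2]
        apply ENNReal.ofReal_le_ofReal
        have h1 : 0 < 1 / r := by positivity
        have h2 : 0 < r ^ k := by positivity
        nlinarith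
    have hsum : Summable (fun k : ℕ => 2 * (1 + 1 / r) * s ^ k) :=
      (summable_geometric_of_lt_one (by linarith) hs1).mul_left _
    refine lt_of_le_of_lt (ENNReal.tsum_le_tsum (g := fun k =>
      ENNReal.ofReal (2 * (1 + 1 / r) * s ^ k)) ?_) hsum.tsum_ofReal_lt_top
    intro k
    split_ifs with hk
    · rw [na k hk, nb k hk, hσ, Real.log_exp]
      refine (mul_le_mul_left (hwle k hk) _).trans ?_
      have hp := hpow k
      rw [← ENNReal.ofReal_add (by linarith) (by linarith), ← ENNReal.ofReal_mul (by positivity)]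
      apply ENNReal.ofReal_le_ofReal
      rw [← hrl, mul_pow]
      apply le_of_eq; ring
    · exact zero_le
  · rw [e2]
    obtain ⟨m, hm⟩ := pow_unbounded_of_one_lt (1 / r) hl1
    have hm1 : 1 ≤ r * l ^ m := by
      rw [div_lt_iff₀ hr0] at hm; linarith
    have hc : ENNReal.ofReal (1 / (m.factorial : ℝ)) ≠ 0 := by
      have : (0:ℝ) < 1 / (m.factorial : ℝ) := by positivity
      exact (ENNReal.ofReal_pos.2 this).ne'
    rw [eq_top_iff, ← ENNReal.tsum_const_eq_top_of_ne_zero (α := ℕ) hc]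
    refine le_trans (ENNReal.tsum_le_tsum ?_) (ENNReal.tsum_comp_le_tsum_of_injective
      (add_left_injective 2) _)
    intro j
    show _ ≤ if 1 ≤ j + 2 then 2 * w (j + 2) * ENNReal.ofReal (Real.exp (l ^ (j + 2)) - 1) else 0
    rw [if_pos (by omega), hw (j + 2) (by omega)]
    generalize j + 2 = k
    have hp := hpow k
    have h2 : (2 : ℝ≥0∞) = ENNReal.ofReal 2 := by simp
    rw [h2, ← ENNReal.ofReal_mul (by norm_num), ← ENNReal.ofReal_mul (by positivity)]
    apply ENNReal.ofReal_le_ofReal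
    have hexp : (l ^ k) ^ m / (m.factorial : ℝ) ≤ Real.exp (l ^ k) :=
      Real.pow_div_factorial_le_exp _ (by linarith) m
    have hexp2 : 2 ≤ Real.exp (l ^ k) := by linarith [Real.add_one_le_exp (l ^ k)]
    have hrk : 0 < r ^ k := by positivity
    calc 1 / (m.factorial : ℝ) ≤ (r * l ^ m) ^ k / (m.factorial : ℝ) := by
          gcongr; exact one_le_pow₀ hm1
      _ = r ^ k * ((l ^ k) ^ m / (m.factorial : ℝ)) := by
          rw [mul_pow, ← pow_mul, ← pow_mul, mul_comm m k]; ring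
      _ ≤ r ^ k * Real.exp (l ^ k) := by gcongr
      _ ≤ 2 * r ^ k * (Real.exp (l ^ k) - 1) := by nlinarith
end
end
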